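/- arXiv:2010.06486 — 6 statements merged into one kernel-verified Lean document; each statement's English description precedes it below -/
import Mathlib

section
/- Let N ∈ ℕ with N ≥ 1 and let r, s > 0 be real numbers. Set C = √(s² + r²) and p = 1/2 + s/(2C) ∈ (1/2, 1). Let L be the (N+1)×(N+1) real symmetric tridiagonal matrix with entries L_{n,n} = s(2n − N) for 0 ≤ n ≤ N and L_{n+1,n} = L_{n,n+1} = r√((n+1)(N−n)) for 0 ≤ n ≤ N−1, all other entries zero. Let W(x) = binom(N,x) p^x (1−p)^{N−x} and let Q be the (N+1)×(N+1) matrix with entries Q_{n,x} = K_n(x; p, N) √(W(x)). Then Q is an orthogonal matrix (QᵀQ = QQᵀ = I), and L·Q = Q·D where D is the diagonal matrix with entries D_{x,x} = C(N − 2x), x = 0, …, N. In particular L has the simple spectrum {C(N − 2x) : x = 0, …, N}, and for each x the vector (K_n(x; p, N))_{n=0}^{N} is an eigenvector of L with eigenvalue C(N − 2x). -/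
open Matrix

/-- Pochhammer symbol (q)_l = q(q+1)⋯(q+l−1). -/
noncomputable def poch (q : ℝ) (l : ℕ) : ℝ := ∏ i ∈ Finset.range l, (q + i)

/-- Orthonormal Krawtchouk polynomials
K_n(x; p, N) = (p/(1−p))^{n/2} √(binom(N,n)) Σ_l (−n)_l (−x)_l / ((−N)_l l!) p^{−l}. -/
noncomputable def krawtchouk (n x : ℕ) (p : ℝ) (N : ℕ) : ℝ :=
  (p / (1 - p)) ^ ((n : ℝ) / 2) * Real.sqrt (N.choose n) *
    ∑ l ∈ Finset.range (n + 1),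
      poch (-(n : ℝ)) l * poch (-(x : ℝ)) l / (poch (-(N : ℝ)) l * (l.factorial : ℝ))
        * (1 / p) ^ l

/-!
The three-term recurrence of the Krawtchouk polynomials says that their values at a node `x` form
an eigenvector of the Lax matrix. Orthogonality then needs no summation formula: the matrix `Q` is
symmetric because the Krawtchouk polynomials are self-dual in `n` and `x`, so `Q * Q` commutes with
the diagonal matrix of the distinct eigenvalues and is itself diagonal. Since `Q * Q` also commutes
with `Q`, whose zeroth row has no zero entry, it is a scalar matrix, and its `(0, 0)` entry is the
total mass `1` of the binomial distribution.
-/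

section DiagonalizingMatrix

variable {ι R : Type*} [Fintype ι] [DecidableEq ι]

theorem isDiag_of_commute_diagonal_of_injective [CommRing R] [NoZeroDivisors R]
    {M : Matrix ι ι R} {d : ι → R} (hd : Function.Injective d)
    (hM : Commute M (diagonal d)) : M.IsDiag := by
  intro i j hij
  have hentry := congrFun₂ hM.eq i j
  rw [mul_diagonal, diagonal_mul] at hentry
  have hmul : (d i - d j) * M i j = 0 := by linear_combination -hentry
  exact (mul_eq_zero.mp hmul).resolve_left (sub_ne_zero.mpr (hd.ne hij))

theorem commute_mul_self_diagonal_of_isSymm [CommRing R] {A Q : Matrix ι ι R} {d : ι → R}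
    (hA : A.IsSymm) (hQ : Q.IsSymm) (h : A * Q = Q * diagonal d) :
    Commute (Q * Q) (diagonal d) := by
  have htranspose : Q * A = diagonal d * Q := by
    simpa only [transpose_mul, hA.eq, hQ.eq, diagonal_transpose] using congrArg transpose h
  calc Q * Q * diagonal d = Q * A * Q := by rw [Matrix.mul_assoc, ← h, Matrix.mul_assoc]
    _ = diagonal d * (Q * Q) := by rw [htranspose, Matrix.mul_assoc]

theorem mul_self_eq_one_of_isDiag [CommRing R] [NoZeroDivisors R] {Q : Matrix ι ι R}
    (hdiag : (Q * Q).IsDiag) {i : ι} (hrow : ∀ j, Q i j ≠ 0) (hi : (Q * Q) i i = 1) :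
    Q * Q = 1 := by
  have hcomm : Q * (Q * Q) = Q * Q * Q := (Matrix.mul_assoc Q Q Q).symm
  rw [← hdiag.diagonal_diag] at hcomm ⊢
  refine diagonal_eq_one.mpr (funext fun j => mul_left_cancel₀ (hrow j) ?_)
  have hentry := congrFun₂ hcomm i j
  have hdiag_i : (Q * Q).diag i = 1 := hi
  rwa [mul_diagonal, diagonal_mul, hdiag_i, mul_comm 1] at hentry

theorem spectrum_eq_range_of_mul_eq_mul_diagonal {K : Type*} [Field K] {A Q : Matrix ι ι K}
    {d : ι → K} (hQ : IsUnit Q) (h : A * Q = Q * diagonal d) :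
    spectrum K A = Set.range d := by
  obtain ⟨u, rfl⟩ := hQ
  have hconj : A = u * diagonal d * (↑u⁻¹ : Matrix ι ι K) := by
    rw [← h, Units.mul_inv_cancel_right]
  rw [hconj, spectrum.units_conjugate, spectrum_diagonal]

end DiagonalizingMatrix

section Pochhammer

theorem poch_zero (q : ℝ) : poch q 0 = 1 := Finset.prod_range_zero _

theorem poch_succ (q : ℝ) (l : ℕ) : poch q (l + 1) = poch q l * (q + l) :=
  Finset.prod_range_succ _ l

theorem poch_succ_left (q : ℝ) (l : ℕ) : poch q (l + 1) = q * poch (q + 1) l := by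
  simp only [poch, Finset.prod_range_succ', Nat.cast_succ, Nat.cast_zero, add_zero, add_assoc,
    add_comm (1 : ℝ), mul_comm q]

theorem poch_neg_natCast_eq_zero {n l : ℕ} (h : n < l) : poch (-(n : ℝ)) l = 0 :=
  Finset.prod_eq_zero (Finset.mem_range.mpr h) (neg_add_cancel _)

theorem poch_neg_natCast_ne_zero {n l : ℕ} (h : l ≤ n) : poch (-(n : ℝ)) l ≠ 0 := by
  refine Finset.prod_ne_zero_iff.mpr fun i hi => ?_
  have hin : (i : ℝ) < n := by exact_mod_cast (Finset.mem_range.mp hi).trans_le h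
  linarith

theorem poch_difference (p N y : ℝ) (l : ℕ) :
    p * (N - y) * (poch (-(y + 1)) (l + 1) - poch (-y) (l + 1))
        - y * (1 - p) * (poch (-y) (l + 1) - poch (-(y - 1)) (l + 1))
      = -(l + 1) * poch (-y) (l + 1) + p * (l + 1) * (l - N) * poch (-y) l := by
  have hup : poch (-(y + 1)) (l + 1) = -(y + 1) * poch (-y) l := by
    rw [poch_succ_left, neg_add_rev, neg_add_cancel_comm]
  have hdown : y * poch (-(y - 1)) (l + 1) = -(poch (-y) l * (-y + l) * (-y + (l + 1))) := by
    have h := poch_succ_left (-y) (l + 1)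
    rw [poch_succ, poch_succ, Nat.cast_succ] at h
    rw [neg_sub, sub_eq_neg_add]
    linarith
  rw [hup, poch_succ (-y)]
  linear_combination (1 - p) * hdown

end Pochhammer

section HypergeometricSum

/-- The coefficient of `(-y)_l` in the hypergeometric sum `krawtchoukSum N p y x`. -/
noncomputable def krawtchoukCoeff (N : ℕ) (p x : ℝ) (l : ℕ) : ℝ :=
  poch (-x) l / (poch (-(N : ℝ)) l * (l.factorial : ℝ)) * (1 / p) ^ l

/-- The Krawtchouk polynomial in its hypergeometric normalization `₂F₁(-y, -x; -N; 1/p)`, the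
series being cut off at `l = N`. The degree `y` is a real number, so that it can be shifted by `1`
in both directions. -/
noncomputable def krawtchoukSum (N : ℕ) (p y x : ℝ) : ℝ :=
  ∑ l ∈ Finset.range (N + 1), poch (-y) l * krawtchoukCoeff N p x l

theorem krawtchoukSum_comm (N : ℕ) (p y x : ℝ) :
    krawtchoukSum N p y x = krawtchoukSum N p x y :=
  Finset.sum_congr rfl fun l _ => by unfold krawtchoukCoeff; ring

theorem krawtchoukCoeff_succ {N l : ℕ} (hl : l < N) {p : ℝ} (hp : p ≠ 0) (x : ℝ) :
    p * (l + 1) * (l - N) * krawtchoukCoeff N p x (l + 1) = (l - x) * krawtchoukCoeff N p x l := by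
  have hpoch := poch_neg_natCast_ne_zero hl.le
  have hlN : -(N : ℝ) + l ≠ 0 :=
    right_ne_zero_of_mul (poch_succ _ l ▸ poch_neg_natCast_ne_zero (Nat.succ_le_of_lt hl))
  have hfact : (l.factorial : ℝ) ≠ 0 := by exact_mod_cast l.factorial_ne_zero
  unfold krawtchoukCoeff
  rw [poch_succ, poch_succ, Nat.factorial_succ, pow_succ]
  push_cast
  field_simp
  ring

theorem sub_mul_krawtchoukCoeff_self {N x : ℕ} (hx : x ≤ N) (p : ℝ) :
    ((x : ℝ) - N) * krawtchoukCoeff N p x N = 0 := by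
  rcases hx.eq_or_lt with rfl | hlt
  · rw [sub_self, zero_mul]
  · rw [krawtchoukCoeff, poch_neg_natCast_eq_zero hlt]
    ring

theorem krawtchoukSum_difference {N x : ℕ} (hx : x ≤ N) {p : ℝ} (hp : p ≠ 0) (y : ℝ) :
    p * (N - y) * (krawtchoukSum N p (y + 1) x - krawtchoukSum N p y x)
        - y * (1 - p) * (krawtchoukSum N p y x - krawtchoukSum N p (y - 1) x)
      = -x * krawtchoukSum N p y x := by
  set c := krawtchoukCoeff N p x
  set A : ℕ → ℝ := fun l => p * (N - y) * (poch (-(y + 1)) l - poch (-y) l)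
    - y * (1 - p) * (poch (-y) l - poch (-(y - 1)) l)
  have hA_succ (l : ℕ) (hl : l ∈ Finset.range N) : A (l + 1) * c (l + 1)
      = -(l + 1) * poch (-y) (l + 1) * c (l + 1) + (l - x) * poch (-y) l * c l := by
    have hc := krawtchoukCoeff_succ (Finset.mem_range.mp hl) hp (x : ℝ)
    linear_combination c (l + 1) * poch_difference p N y l + poch (-y) l * hc
  have hA_zero : A 0 = 0 := by simp only [A, poch_zero]; ring
  have hlower : ∑ l ∈ Finset.range N, (l - x) * poch (-y) l * c l
      = ∑ l ∈ Finset.range (N + 1), (l - x) * poch (-y) l * c l := by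
    rw [Finset.sum_range_succ]
    linear_combination poch (-y) N * sub_mul_krawtchoukCoeff_self hx p
  have hdiagonal : ∑ l ∈ Finset.range N, -((l : ℝ) + 1) * poch (-y) (l + 1) * c (l + 1)
      = ∑ l ∈ Finset.range (N + 1), -(l : ℝ) * poch (-y) l * c l := by
    rw [Finset.sum_range_succ']
    push_cast
    ring
  calc _ = ∑ l ∈ Finset.range (N + 1), A l * c l := by
        simp only [krawtchoukSum, Finset.mul_sum, ← Finset.sum_sub_distrib]
        exact Finset.sum_congr rfl fun l _ => by ring
    _ = ∑ l ∈ Finset.range (N + 1),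
          (-(l : ℝ) * poch (-y) l * c l + (l - x) * poch (-y) l * c l) := by
        rw [Finset.sum_range_succ', hA_zero, zero_mul, add_zero, Finset.sum_congr rfl hA_succ,
          Finset.sum_add_distrib, Finset.sum_add_distrib, hlower, hdiagonal]
    _ = _ := by
        rw [krawtchoukSum, Finset.mul_sum]
        exact Finset.sum_congr rfl fun l _ => by ring

end HypergeometricSum

section Normalization

/-- The factor `(p / (1 - p))^(n / 2) * √(binom N n)` turning the hypergeometric normalization of
the Krawtchouk polynomial of degree `n` into the orthonormal one. -/
noncomputable def krawtchoukNorm (N : ℕ) (p : ℝ) (n : ℕ) : ℝ :=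
  √(p / (1 - p)) ^ n * √(N.choose n)

theorem krawtchouk_eq_krawtchoukNorm_mul {p : ℝ} (hp : 0 ≤ p / (1 - p)) (n x N : ℕ) :
    krawtchouk n x p N = krawtchoukNorm N p n * krawtchoukSum N p n x := by
  rcases le_or_gt n N with hn | hn
  · have hsum : ∑ l ∈ Finset.range (n + 1), poch (-(n : ℝ)) l * krawtchoukCoeff N p x l
        = krawtchoukSum N p n x := by
      refine Finset.sum_subset (by gcongr) fun l _ hl => ?_
      rw [poch_neg_natCast_eq_zero (by simpa using hl), zero_mul]
    rw [krawtchouk, krawtchoukNorm, Real.rpow_div_two_eq_sqrt _ hp, Real.rpow_natCast, ← hsum]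
    congr 1
    exact Finset.sum_congr rfl fun l _ => by unfold krawtchoukCoeff; ring
  · simp [krawtchouk, krawtchoukNorm, Nat.choose_eq_zero_of_lt hn]

theorem choose_succ_mul_eq_choose_mul_sub {N k : ℕ} (hk : k ≤ N) :
    (N.choose (k + 1) : ℝ) * (k + 1) = N.choose k * (N - k) := by
  exact_mod_cast congrArg (Nat.cast : ℕ → ℝ) (Nat.choose_succ_right_eq N k)

theorem sqrt_mul_sqrt_choose_succ {N k : ℕ} (hk : k ≤ N) :
    √((k + 1) * (N - k)) * √(N.choose (k + 1)) = (N - k) * √(N.choose k) := by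
  have hNk : (0 : ℝ) ≤ N - k := sub_nonneg.mpr (by exact_mod_cast hk)
  have hsq : ((k : ℝ) + 1) * (N - k) * N.choose (k + 1) = (N - k) ^ 2 * N.choose k := by
    linear_combination (N - k : ℝ) * choose_succ_mul_eq_choose_mul_sub hk
  rw [← Real.sqrt_mul (by positivity), hsq, Real.sqrt_mul (sq_nonneg _), Real.sqrt_sq hNk]

theorem sqrt_mul_sqrt_choose {N k : ℕ} (hk : k ≤ N) :
    √((k + 1) * (N - k)) * √(N.choose k) = (k + 1) * √(N.choose (k + 1)) := by
  have hNk : (0 : ℝ) ≤ N - k := sub_nonneg.mpr (by exact_mod_cast hk)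
  have hsq : ((k : ℝ) + 1) * (N - k) * N.choose k = (k + 1) ^ 2 * N.choose (k + 1) := by
    linear_combination -(k + 1 : ℝ) * choose_succ_mul_eq_choose_mul_sub hk
  rw [← Real.sqrt_mul (by positivity), hsq, Real.sqrt_mul (sq_nonneg _),
    Real.sqrt_sq (by positivity)]

theorem sqrt_mul_sqrt_odds {p : ℝ} (hp0 : 0 < p) (hp1 : p < 1) :
    √(p * (1 - p)) * √(p / (1 - p)) = p := by
  have hq : 1 - p ≠ 0 := (sub_pos.mpr hp1).ne'
  rw [← Real.sqrt_mul (mul_pos hp0 (sub_pos.mpr hp1)).le, mul_assoc, mul_div_cancel₀ p hq,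
    Real.sqrt_mul_self hp0.le]

theorem sqrt_eq_one_sub_mul_sqrt_odds {p : ℝ} (hp1 : p < 1) :
    √(p * (1 - p)) = (1 - p) * √(p / (1 - p)) := by
  have hq : 0 < 1 - p := sub_pos.mpr hp1
  have hsq : p * (1 - p) = (1 - p) ^ 2 * (p / (1 - p)) := by field_simp
  rw [hsq, Real.sqrt_mul (sq_nonneg _), Real.sqrt_sq hq.le]

theorem sqrt_mul_krawtchoukNorm_succ {p : ℝ} (hp0 : 0 < p) (hp1 : p < 1) {N k : ℕ} (hk : k ≤ N) :
    √(p * (1 - p)) * √((k + 1) * (N - k)) * krawtchoukNorm N p (k + 1)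
      = p * (N - k) * krawtchoukNorm N p k := by
  calc _ = √(p * (1 - p)) * √(p / (1 - p)) * √(p / (1 - p)) ^ k
        * (√((k + 1) * (N - k)) * √(N.choose (k + 1))) := by unfold krawtchoukNorm; ring
    _ = _ := by
      rw [sqrt_mul_sqrt_odds hp0 hp1, sqrt_mul_sqrt_choose_succ hk, krawtchoukNorm]
      ring

theorem sqrt_mul_krawtchoukNorm {p : ℝ} (hp1 : p < 1) {N k : ℕ} (hk : k ≤ N) :
    √(p * (1 - p)) * √((k + 1) * (N - k)) * krawtchoukNorm N p k
      = (1 - p) * (k + 1) * krawtchoukNorm N p (k + 1) := by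
  calc _ = √(p * (1 - p)) * √(p / (1 - p)) ^ k
        * (√((k + 1) * (N - k)) * √(N.choose k)) := by unfold krawtchoukNorm; ring
    _ = _ := by
      rw [sqrt_eq_one_sub_mul_sqrt_odds hp1, sqrt_mul_sqrt_choose hk, krawtchoukNorm]
      ring

-- At `n = 0` the truncated `n - 1` is harmless, since its coefficient vanishes.
theorem krawtchouk_three_term {p : ℝ} (hp0 : 0 < p) (hp1 : p < 1) {N n x : ℕ} (hn : n ≤ N)
    (hx : x ≤ N) :
    √(p * (1 - p)) * √((n + 1) * (N - n)) * krawtchouk (n + 1) x p N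
        + √(p * (1 - p)) * √(n * (N + 1 - n)) * krawtchouk (n - 1) x p N
      = (p * (N - n) + n * (1 - p) - x) * krawtchouk n x p N := by
  have hodds : 0 ≤ p / (1 - p) := (div_pos hp0 (sub_pos.mpr hp1)).le
  have hup : √(p * (1 - p)) * √((n + 1) * (N - n)) * krawtchouk (n + 1) x p N
      = p * (N - n) * krawtchoukNorm N p n * krawtchoukSum N p (n + 1) x := by
    rw [krawtchouk_eq_krawtchoukNorm_mul hodds, ← mul_assoc,
      sqrt_mul_krawtchoukNorm_succ hp0 hp1 hn, Nat.cast_succ]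
  have hdown : √(p * (1 - p)) * √(n * (N + 1 - n)) * krawtchouk (n - 1) x p N
      = (1 - p) * n * krawtchoukNorm N p n * krawtchoukSum N p (n - 1) x := by
    rcases n with _ | k
    · simp
    · rw [krawtchouk_eq_krawtchoukNorm_mul hodds, ← mul_assoc, Nat.add_sub_cancel, Nat.cast_succ,
        add_sub_add_right_eq_sub, sqrt_mul_krawtchoukNorm hp1 (Nat.le_of_succ_le hn),
        add_sub_cancel_right]
  rw [hup, hdown, krawtchouk_eq_krawtchoukNorm_mul hodds]
  linear_combination krawtchoukNorm N p n * krawtchoukSum_difference hx hp0.ne' n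

end Normalization

section LaxMatrix

/-- The Lax operator `s H + r (E + F)` in the representation of `su(2)` of dimension `N + 1`. -/
noncomputable def laxMatrix (N : ℕ) (r s : ℝ) : Matrix (Fin (N + 1)) (Fin (N + 1)) ℝ :=
  Matrix.of fun n m =>
    if (n : ℕ) = (m : ℕ) then s * (2 * ((n : ℕ) : ℝ) - (N : ℝ))
    else if (n : ℕ) + 1 = (m : ℕ) then
      r * √((((n : ℕ) : ℝ) + 1) * ((N : ℝ) - ((n : ℕ) : ℝ)))
    else if (m : ℕ) + 1 = (n : ℕ) then
      r * √((((m : ℕ) : ℝ) + 1) * ((N : ℝ) - ((m : ℕ) : ℝ)))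
    else 0

theorem laxMatrix_isSymm (N : ℕ) (r s : ℝ) : (laxMatrix N r s).IsSymm := by
  ext n m
  simp only [transpose_apply, laxMatrix, of_apply]
  split_ifs <;> first | omega | simp_all

theorem laxMatrix_apply (N : ℕ) (r s : ℝ) (n m : Fin (N + 1)) :
    laxMatrix N r s n m = (if (n : ℕ) = m then s * (2 * n - N) else 0)
      + (if (n : ℕ) + 1 = m then r * √((n + 1) * (N - n)) else 0)
      + (if (m : ℕ) + 1 = n then r * √((m + 1) * (N - m)) else 0) := by
  simp only [laxMatrix, of_apply]
  split_ifs <;> first | omega | simp only [add_zero, zero_add]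

theorem laxMatrix_mulVec_apply (N : ℕ) (r s : ℝ) (f : ℕ → ℝ) (n : Fin (N + 1)) :
    (laxMatrix N r s *ᵥ fun m => f m) n = s * (2 * n - N) * f n
      + r * √((n + 1) * (N - n)) * f (n + 1) + r * √(n * (N + 1 - n)) * f (n - 1) := by
  obtain ⟨n, hn⟩ := n
  have hupper : ∑ m ∈ Finset.range (N + 1),
      (if n + 1 = m then r * √((n + 1) * (N - n)) * f m else 0)
        = r * √((n + 1) * (N - n)) * f (n + 1) := by
    rw [Finset.sum_ite_eq, ite_eq_left_iff]
    intro hmem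
    obtain rfl : n = N := by rw [Finset.mem_range] at hmem; omega
    simp
  have hlower : ∑ m ∈ Finset.range (N + 1),
      (if m + 1 = n then r * √((m + 1) * (N - m)) * f m else 0)
        = r * √(n * (N + 1 - n)) * f (n - 1) := by
    rcases n with _ | k
    · simp
    · have hk : k ∈ Finset.range (N + 1) := Finset.mem_range.mpr (Nat.lt_of_succ_lt hn)
      simp only [add_left_inj, Finset.sum_ite_eq', if_pos hk, Nat.cast_succ,
        add_sub_add_right_eq_sub, Nat.add_sub_cancel]
  simp only [mulVec, dotProduct, laxMatrix_apply, add_mul _ _ (f _), ite_mul, zero_mul,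
    Finset.sum_add_distrib]
  rw [Fin.sum_univ_eq_sum_range (fun m => if n = m then s * (2 * n - N) * f m else 0),
    Fin.sum_univ_eq_sum_range
      (fun m => if n + 1 = m then r * √((n + 1) * (N - n)) * f m else 0),
    Fin.sum_univ_eq_sum_range
      (fun m => if m + 1 = n then r * √((m + 1) * (N - m)) * f m else 0),
    hupper, hlower, Finset.sum_ite_eq, if_pos (Finset.mem_range.mpr hn)]

theorem laxMatrix_mulVec_krawtchouk {p : ℝ} (hp0 : 0 < p) (hp1 : p < 1) (C : ℝ) {N x : ℕ}
    (hx : x ≤ N) :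
    (laxMatrix N (2 * C * √(p * (1 - p))) (C * (2 * p - 1)) *ᵥ fun n => krawtchouk n x p N)
      = (C * (N - 2 * x)) • fun n : Fin (N + 1) => krawtchouk n x p N := by
  funext n
  rw [laxMatrix_mulVec_apply N _ _ (fun n => krawtchouk n x p N), Pi.smul_apply, smul_eq_mul]
  linear_combination 2 * C * krawtchouk_three_term hp0 hp1 n.is_le hx

theorem injective_mul_sub_two_mul (N : ℕ) {C : ℝ} (hC : C ≠ 0) :
    Function.Injective fun x : Fin (N + 1) => C * ((N : ℝ) - 2 * ((x : ℕ) : ℝ)) := by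
  intro x y hxy
  have hcast : ((x : ℕ) : ℝ) = y := by linarith [mul_left_cancel₀ hC hxy]
  exact Fin.ext (by exact_mod_cast hcast)

end LaxMatrix

section KrawtchoukMatrix

variable {p : ℝ}

/-- The mass at `x` of the binomial distribution with parameters `N` and `p`, the orthogonality
weight of the Krawtchouk polynomials. -/
noncomputable def binomialWeight (N : ℕ) (p : ℝ) (x : ℕ) : ℝ :=
  (N.choose x : ℝ) * p ^ x * (1 - p) ^ (N - x)

theorem binomialWeight_pos (hp0 : 0 < p) (hp1 : p < 1) {N x : ℕ} (hx : x ≤ N) :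
    0 < binomialWeight N p x := by
  have hchoose : (0 : ℝ) < N.choose x := by exact_mod_cast Nat.choose_pos hx
  exact mul_pos (mul_pos hchoose (pow_pos hp0 x)) (pow_pos (sub_pos.mpr hp1) _)

theorem sum_binomialWeight (N : ℕ) (p : ℝ) :
    ∑ x : Fin (N + 1), binomialWeight N p x = 1 := by
  calc _ = ∑ x ∈ Finset.range (N + 1), p ^ x * (1 - p) ^ (N - x) * (N.choose x : ℝ) := by
        rw [Fin.sum_univ_eq_sum_range (binomialWeight N p)]
        exact Finset.sum_congr rfl fun x _ => by unfold binomialWeight; ring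
    _ = 1 := by rw [← add_pow, add_sub_cancel, one_pow]

theorem sqrt_binomialWeight (hp0 : 0 < p) (hp1 : p < 1) {N x : ℕ} (hx : x ≤ N) :
    √(binomialWeight N p x) = √((1 - p) ^ N) * krawtchoukNorm N p x := by
  have hq : 0 < 1 - p := sub_pos.mpr hp1
  have hodds : 0 ≤ p / (1 - p) := (div_pos hp0 hq).le
  have hweight : binomialWeight N p x
      = (1 - p) ^ N * ((√(p / (1 - p)) ^ x) ^ 2 * N.choose x) := by
    rw [binomialWeight, ← pow_mul, mul_comm x, pow_mul, Real.sq_sqrt hodds, div_pow,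
      ← pow_sub_mul_pow (1 - p) hx]
    field_simp
  rw [hweight, Real.sqrt_mul (pow_nonneg hq.le N), Real.sqrt_mul (sq_nonneg _),
    Real.sqrt_sq (pow_nonneg (Real.sqrt_nonneg _) x), krawtchoukNorm]

/-- The matrix `Q` of values of the Krawtchouk polynomials at the nodes `0, …, N`, each column
scaled by the square root of the binomial weight of its node. -/
noncomputable def krawtchoukMatrix (N : ℕ) (p : ℝ) : Matrix (Fin (N + 1)) (Fin (N + 1)) ℝ :=
  Matrix.of fun n x => krawtchouk n x p N * √(binomialWeight N p x)

theorem krawtchoukMatrix_apply_zero (N : ℕ) (p : ℝ) (x : Fin (N + 1)) :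
    krawtchoukMatrix N p 0 x = √(binomialWeight N p x) := by
  simp [krawtchoukMatrix, krawtchouk, poch_zero]

theorem krawtchoukMatrix_isSymm (hp0 : 0 < p) (hp1 : p < 1) (N : ℕ) :
    (krawtchoukMatrix N p).IsSymm := by
  have hodds : 0 ≤ p / (1 - p) := (div_pos hp0 (sub_pos.mpr hp1)).le
  ext n x
  simp only [transpose_apply, krawtchoukMatrix, of_apply, krawtchouk_eq_krawtchoukNorm_mul hodds,
    sqrt_binomialWeight hp0 hp1 (Fin.is_le _), krawtchoukSum_comm N p n x]
  ring

theorem laxMatrix_mul_krawtchoukMatrix (hp0 : 0 < p) (hp1 : p < 1) (N : ℕ) (C : ℝ) :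
    laxMatrix N (2 * C * √(p * (1 - p))) (C * (2 * p - 1)) * krawtchoukMatrix N p
      = krawtchoukMatrix N p
        * diagonal fun x : Fin (N + 1) => C * ((N : ℝ) - 2 * ((x : ℕ) : ℝ)) := by
  ext n x
  have heigen := congrFun (laxMatrix_mulVec_krawtchouk hp0 hp1 C x.is_le) n
  simp only [mulVec, dotProduct, Pi.smul_apply, smul_eq_mul] at heigen
  rw [mul_diagonal, mul_apply]
  simp only [krawtchoukMatrix, of_apply, ← mul_assoc]
  rw [← Finset.sum_mul, heigen]
  ring

theorem krawtchoukMatrix_mul_self (hp0 : 0 < p) (hp1 : p < 1) (N : ℕ) :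
    krawtchoukMatrix N p * krawtchoukMatrix N p = 1 := by
  have hsymm := krawtchoukMatrix_isSymm hp0 hp1 N
  have hcomm := commute_mul_self_diagonal_of_isSymm (laxMatrix_isSymm N _ _) hsymm
    (laxMatrix_mul_krawtchoukMatrix hp0 hp1 N 1)
  have hdiag := isDiag_of_commute_diagonal_of_injective
    (injective_mul_sub_two_mul N one_ne_zero) hcomm
  refine mul_self_eq_one_of_isDiag hdiag (i := 0) (fun x => ?_) ?_
  · rw [krawtchoukMatrix_apply_zero]
    exact (Real.sqrt_pos.mpr (binomialWeight_pos hp0 hp1 x.is_le)).ne'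
  · rw [mul_apply, ← sum_binomialWeight N p]
    refine Finset.sum_congr rfl fun x _ => ?_
    rw [hsymm.apply 0 x, krawtchoukMatrix_apply_zero,
      Real.mul_self_sqrt (binomialWeight_pos hp0 hp1 x.is_le).le]

end KrawtchoukMatrix

theorem lax_reparametrization {r s C p : ℝ} (hr : 0 < r) (hC : C = √(s ^ 2 + r ^ 2))
    (hp : p = 1 / 2 + s / (2 * C)) :
    0 < C ∧ (0 < p ∧ p < 1) ∧ r = 2 * C * √(p * (1 - p)) ∧ s = C * (2 * p - 1) := by
  have hC0 : 0 < C := by rw [hC]; positivity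
  have hCsq : C ^ 2 = s ^ 2 + r ^ 2 := by rw [hC, Real.sq_sqrt (by positivity)]
  obtain ⟨hsC, hsC'⟩ : -C < s ∧ s < C := abs_lt_of_sq_lt_sq' (by nlinarith) hC0.le
  have hs : s = C * (2 * p - 1) := by rw [hp]; field_simp; ring
  have hprod : p * (1 - p) = (r / (2 * C)) ^ 2 := by
    field_simp
    linear_combination hCsq + (s + C * (2 * p - 1)) * hs
  refine ⟨hC0, ⟨by nlinarith, by nlinarith⟩, ?_, hs⟩
  rw [hprod, Real.sqrt_sq (by positivity)]
  field_simp

theorem stmt_3_general (N : ℕ) {r : ℝ} (hr : 0 < r) (s : ℝ) {C p : ℝ} (hC : C = √(s ^ 2 + r ^ 2))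
    (hp : p = 1 / 2 + s / (2 * C)) :
    let L := laxMatrix N r s
    let Q := krawtchoukMatrix N p
    let eigenvalue := fun x : Fin (N + 1) => C * ((N : ℝ) - 2 * ((x : ℕ) : ℝ))
    (0 < p ∧ p < 1) ∧ (1 / 2 < p ↔ 0 < s) ∧
    Qᵀ * Q = 1 ∧ Q * Qᵀ = 1 ∧ L * Q = Q * diagonal eigenvalue ∧
    (∀ x : Fin (N + 1), (L *ᵥ fun n => krawtchouk n x p N)
      = eigenvalue x • fun n : Fin (N + 1) => krawtchouk n x p N) ∧
    spectrum ℝ L = Set.range eigenvalue ∧ Function.Injective eigenvalue := by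
  intro L Q eigenvalue
  obtain ⟨hC0, ⟨hp0, hp1⟩, hr', hs'⟩ := lax_reparametrization hr hC hp
  have hL : L = laxMatrix N (2 * C * √(p * (1 - p))) (C * (2 * p - 1)) := by rw [← hr', ← hs']
  have hQ : Qᵀ = Q := krawtchoukMatrix_isSymm hp0 hp1 N
  have hQQ : Q * Q = 1 := krawtchoukMatrix_mul_self hp0 hp1 N
  have hLQ : L * Q = Q * diagonal eigenvalue :=
    hL ▸ laxMatrix_mul_krawtchoukMatrix hp0 hp1 N C
  have hhalf : 1 / 2 < p ↔ 0 < s := by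
    rw [hp, lt_add_iff_pos_right, div_pos_iff_of_pos_right (by positivity)]
  exact ⟨⟨hp0, hp1⟩, hhalf, hQ.symm ▸ hQQ, hQ.symm ▸ hQQ, hLQ,
    fun x => hL ▸ laxMatrix_mulVec_krawtchouk hp0 hp1 C x.is_le,
    spectrum_eq_range_of_mul_eq_mul_diagonal (IsUnit.of_mul_eq_one Q hQQ) hLQ,
    injective_mul_sub_two_mul N hC0.ne'⟩

/-- diagonalization of the su(2) Lax operator by Krawtchouk polynomials. -/
theorem stmt_3 (N : ℕ) (hN : 1 ≤ N) (r s : ℝ) (hr : 0 < r) (hs : 0 < s)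
    (C p : ℝ) (hC : C = Real.sqrt (s ^ 2 + r ^ 2)) (hp : p = 1 / 2 + s / (2 * C))
    (L Q D : Matrix (Fin (N + 1)) (Fin (N + 1)) ℝ)
    (hL : L = Matrix.of fun (n m : Fin (N + 1)) =>
      if (n : ℕ) = (m : ℕ) then s * (2 * ((n : ℕ) : ℝ) - (N : ℝ))
      else if (n : ℕ) + 1 = (m : ℕ) then
        r * Real.sqrt ((((n : ℕ) : ℝ) + 1) * ((N : ℝ) - ((n : ℕ) : ℝ)))
      else if (m : ℕ) + 1 = (n : ℕ) then
        r * Real.sqrt ((((m : ℕ) : ℝ) + 1) * ((N : ℝ) - ((m : ℕ) : ℝ)))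
      else 0)
    (hQ : Q = Matrix.of fun (n x : Fin (N + 1)) =>
      krawtchouk (n : ℕ) (x : ℕ) p N *
        Real.sqrt ((N.choose (x : ℕ) : ℝ) * p ^ (x : ℕ) * (1 - p) ^ (N - (x : ℕ))))
    (hD : D = Matrix.diagonal fun x : Fin (N + 1) => C * ((N : ℝ) - 2 * ((x : ℕ) : ℝ))) :
    (1 / 2 < p ∧ p < 1) ∧
    Qᵀ * Q = 1 ∧ Q * Qᵀ = 1 ∧ L * Q = Q * D ∧
    (∀ x : Fin (N + 1),
      L.mulVec (fun n : Fin (N + 1) => krawtchouk (n : ℕ) (x : ℕ) p N)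
        = (C * ((N : ℝ) - 2 * ((x : ℕ) : ℝ)))
            • (fun n : Fin (N + 1) => krawtchouk (n : ℕ) (x : ℕ) p N)) ∧
    spectrum ℝ L = Set.range (fun x : Fin (N + 1) => C * ((N : ℝ) - 2 * ((x : ℕ) : ℝ))) ∧
    Function.Injective (fun x : Fin (N + 1) => C * ((N : ℝ) - 2 * ((x : ℕ) : ℝ))) := by
  subst hL hQ hD
  obtain ⟨⟨_, hp1⟩, hhalf, hdiagonalization⟩ := stmt_3_general N hr s hC hp
  exact ⟨⟨hhalf.2 hs, hp1⟩, hdiagonalization⟩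
end

section
/- Let r, s : [0,∞) → ℝ be continuously differentiable and u : [0,∞) → ℝ continuous, satisfying ṡ(t) = −2u(t)r(t) and ṙ(t) = −2u(t)s(t) for all t. Assume sgn(u(t)) = −sgn(r(t)) for all t > 0, s(0) > 0 and r(0) > 0. Then s(t) > 0 and r(t) > 0 for all t > 0. -/
/-!
Since `u r ≤ 0`, the derivative `ṡ = -2ur` is nonnegative, so `s` stays positive. Then
`r ṙ = -2(ur)s ≥ 0`, so `r²` is nondecreasing; in particular `r` never vanishes, and by continuity
it keeps its initial sign.
-/

open Set

section MulDerivNonneg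

variable {D : Set ℝ} {f f' : ℝ → ℝ}

lemma monotoneOn_sq_of_mul_hasDerivWithinAt_nonneg (hD : Convex ℝ D) (hf : ContinuousOn f D)
    (hf' : ∀ x ∈ interior D, HasDerivWithinAt f (f' x) (interior D) x)
    (hff' : ∀ x ∈ interior D, 0 ≤ f x * f' x) : MonotoneOn (fun x ↦ f x ^ 2) D :=
  monotoneOn_of_hasDerivWithinAt_nonneg hD (hf.pow 2) (fun x hx ↦ (hf' x hx).pow 2)
    fun x hx ↦ by simpa [mul_assoc] using hff' x hx

lemma pos_of_mul_hasDerivWithinAt_nonneg (hD : Convex ℝ D) (hf : ContinuousOn f D)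
    (hf' : ∀ x ∈ interior D, HasDerivWithinAt f (f' x) (interior D) x)
    (hff' : ∀ x ∈ interior D, 0 ≤ f x * f' x) {a b : ℝ} (ha : a ∈ D) (hb : b ∈ D) (hab : a ≤ b)
    (hfa : 0 < f a) : 0 < f b := by
  by_contra! hfb
  have hsub : Icc a b ⊆ D := hD.ordConnected.out ha hb
  obtain ⟨c, hc, hfc⟩ := intermediate_value_Icc' hab (hf.mono hsub) ⟨hfb, hfa.le⟩
  have hsq : f a ^ 2 ≤ f c ^ 2 :=
    monotoneOn_sq_of_mul_hasDerivWithinAt_nonneg hD hf hf' hff' ha (hsub hc) hc.1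
  rw [hfc, zero_pow two_ne_zero] at hsq
  exact hsq.not_gt (pow_pos hfa 2)

end MulDerivNonneg

lemma mul_nonpos_of_sign_eq_neg_sign {x y : ℝ} (h : Real.sign x = -Real.sign y) : x * y ≤ 0 := by
  have hx : 0 ≤ Real.sign x * x := Real.sign_mul_nonneg x
  have hy : 0 ≤ Real.sign y * y := Real.sign_mul_nonneg y
  rcases Real.sign_apply_eq y with hneg | hzero | hpos
  · exact mul_nonpos_of_nonneg_of_nonpos (by simpa [h, hneg] using hx) (by simpa [hneg] using hy)
  · simp [Real.sign_eq_zero_iff.mp hzero]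
  · exact mul_nonpos_of_nonpos_of_nonneg (by simpa [h, hpos] using hx) (by simpa [hpos] using hy)

theorem stmt_4_general {r s u : ℝ → ℝ}
    (hs : ∀ t ∈ Ici (0 : ℝ), HasDerivWithinAt s (-2 * u t * r t) (Ici 0) t)
    (hr : ∀ t ∈ Ici (0 : ℝ), HasDerivWithinAt r (-2 * u t * s t) (Ici 0) t)
    (hur : ∀ t > (0 : ℝ), u t * r t ≤ 0) (hs0 : 0 < s 0) (hr0 : 0 < r 0) :
    ∀ t > (0 : ℝ), 0 < s t ∧ 0 < r t := by
  have hur' : ∀ t ∈ interior (Ici (0 : ℝ)), u t * r t ≤ 0 := by simpa using hur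
  have s_mono : MonotoneOn s (Ici 0) :=
    monotoneOn_of_hasDerivWithinAt_nonneg (convex_Ici 0) (HasDerivWithinAt.continuousOn hs)
      (fun t ht ↦ (hs t (interior_subset ht)).mono interior_subset)
      fun t ht ↦ by linarith [hur' t ht]
  have s_pos : ∀ t ∈ Ici (0 : ℝ), 0 < s t := fun t ht ↦ hs0.trans_le (s_mono self_mem_Ici ht ht)
  have r_mul_deriv_nonneg : ∀ t ∈ interior (Ici (0 : ℝ)), 0 ≤ r t * (-2 * u t * s t) :=
    fun t ht ↦ by
      linarith [mul_nonpos_of_nonpos_of_nonneg (hur' t ht) (s_pos t (interior_subset ht)).le]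
  refine fun t ht ↦ ⟨s_pos t ht.le, ?_⟩
  exact pos_of_mul_hasDerivWithinAt_nonneg (convex_Ici 0) (HasDerivWithinAt.continuousOn hr)
    (fun t ht ↦ (hr t (interior_subset ht)).mono interior_subset) r_mul_deriv_nonneg
    self_mem_Ici ht.le ht.le hr0

/-- positivity of r and s for the su(1,1) Lax system ṡ = −2ur, ṙ = −2us. -/
theorem stmt_4 (r s u : ℝ → ℝ)
    (hs : ∀ t ∈ Set.Ici (0 : ℝ), HasDerivAt s (-2 * u t * r t) t)
    (hr : ∀ t ∈ Set.Ici (0 : ℝ), HasDerivAt r (-2 * u t * s t) t)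
    (hu : ContinuousOn u (Set.Ici (0 : ℝ)))
    (hsgn : ∀ t > (0 : ℝ), Real.sign (u t) = - Real.sign (r t))
    (hs0 : s 0 > 0) (hr0 : r 0 > 0) :
    ∀ t > (0 : ℝ), s t > 0 ∧ r t > 0 :=
  stmt_4_general (fun t ht ↦ (hs t ht).hasDerivWithinAt) (fun t ht ↦ (hr t ht).hasDerivWithinAt)
    (fun t ht ↦ mul_nonpos_of_sign_eq_neg_sign (hsgn t ht)) hs0 hr0
end

section
/- Let k > 0 and let r, s be real numbers with s > r > 0 (so s² − r² > 0), and let c ∈ (0,1) be the unique solution of (1 + c)/(2√c) = s/r. Set C = √(s² − r²). Then for every x ∈ ℕ and every n ∈ ℕ, the orthonormal Meixner polynomials M_n(x) = M_n(x; 2k, c) satisfy r√((n+1)(n+2k)) M_{n+1}(x) + 2s(n+k) M_n(x) + r√(n(n+2k−1)) M_{n−1}(x) = 2C(x+k) M_n(x), with the convention M_{−1}(x) = 0. That is, for each x ∈ ℕ the sequence (M_n(x; 2k, c))_{n∈ℕ} is a formal eigenvector of the Jacobi operator π_k(L) : e_n ↦ r√((n+1)(n+2k)) e_{n+1} + 2s(k+n)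 e_n + r√(n(n+2k−1)) e_{n−1} with eigenvalue 2C(x+k). -/
/-- Orthonormal Meixner polynomials
M_n(x; β, c) = (−1)^n √((β)_n c^n / n!) Σ_l (−n)_l (−x)_l / ((β)_l l!) (1 − 1/c)^l. -/
noncomputable def meixner (n x : ℕ) (β c : ℝ) : ℝ :=
  (-1) ^ n * Real.sqrt (poch β n * c ^ n / n.factorial) *
    ∑ l ∈ Finset.range (min n x + 1),
      poch (-(n : ℝ)) l * poch (-(x : ℝ)) l / (poch β l * (l.factorial : ℝ))
        * (1 - 1 / c) ^ l

/-!
The function `n ↦ M_n(x; β, c)` is a normalising constant times `₂F₁(-n, -x; β; 1 - 1/c)`, so its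
three-term recurrence is Gauss's contiguous relation between `₂F₁(a - 1)`, `₂F₁(a)` and
`₂F₁(a + 1)` at `a = -n`, an identity between Taylor coefficients. The normalisation makes the
recurrence symmetric, and `c` is chosen so that `2√c s = r(1 + c)`, whence `2√c C = r(1 - c)`:
multiplied by `r / √c`, the recurrence is the eigenvalue equation.
-/

section Hypergeometric

theorem ascPochhammer_eval_succ_left {R : Type*} [CommSemiring R] (n : ℕ) (a : R) :
    (ascPochhammer R (n + 1)).eval a = a * (ascPochhammer R n).eval (a + 1) := by
  simp [ascPochhammer_succ_left]

variable {𝕂 : Type*} [Field 𝕂]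

theorem ordinaryHypergeometricCoefficient_contiguous [CharZero 𝕂] {a b c : 𝕂} {n : ℕ}
    (hc : (ascPochhammer 𝕂 (n + 1)).eval c ≠ 0) :
    (c - a) * ordinaryHypergeometricCoefficient (a - 1) b c (n + 1)
        + (2 * a - c) * ordinaryHypergeometricCoefficient a b c (n + 1)
        - a * ordinaryHypergeometricCoefficient (a + 1) b c (n + 1)
      = (a - b) * ordinaryHypergeometricCoefficient a b c n
        - a * ordinaryHypergeometricCoefficient (a + 1) b c n := by
  have ha_pred : (ascPochhammer 𝕂 (n + 1)).eval (a - 1) = (a - 1) * (ascPochhammer 𝕂 n).eval a := by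
    rw [ascPochhammer_eval_succ_left, sub_add_cancel]
  have ha_succ : a * (ascPochhammer 𝕂 n).eval (a + 1) = (ascPochhammer 𝕂 n).eval a * (a + n) := by
    rw [← ascPochhammer_eval_succ_left, ascPochhammer_succ_eval]
  rw [ascPochhammer_succ_eval] at hc
  obtain ⟨hcn, hc_add⟩ := mul_ne_zero_iff.mp hc
  have hn : (n : 𝕂) + 1 ≠ 0 := Nat.cast_add_one_ne_zero n
  have hfac : (n.factorial : 𝕂) ≠ 0 := Nat.cast_ne_zero.mpr n.factorial_ne_zero
  simp only [ordinaryHypergeometricCoefficient, ha_pred, ascPochhammer_succ_eval,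
    Nat.factorial_succ, Nat.cast_mul, Nat.cast_add_one]
  field_simp
  linear_combination (ascPochhammer 𝕂 n).eval b *
    ((n + 1) * (c + n) - (b + n) * (a + n + 1)) * ha_succ

variable {𝔸 : Type*} [Ring 𝔸] [Algebra 𝕂 𝔸] [TopologicalSpace 𝔸] [IsTopologicalRing 𝔸]
  {a b c : 𝕂} {z : 𝔸}

theorem ordinaryHypergeometricSeries_apply_contiguous [CharZero 𝕂] {n : ℕ}
    (hc : (ascPochhammer 𝕂 (n + 1)).eval c ≠ 0) :
    (c - a) • ordinaryHypergeometricSeries 𝔸 (a - 1) b c (n + 1) (fun _ ↦ z)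
        + (2 * a - c) • ordinaryHypergeometricSeries 𝔸 a b c (n + 1) (fun _ ↦ z)
        - a • ordinaryHypergeometricSeries 𝔸 (a + 1) b c (n + 1) (fun _ ↦ z)
      = ((a - b) • ordinaryHypergeometricSeries 𝔸 a b c n (fun _ ↦ z)
        - a • ordinaryHypergeometricSeries 𝔸 (a + 1) b c n (fun _ ↦ z)) * z := by
  simp only [ordinaryHypergeometricSeries_apply_eq, smul_smul, ← add_smul, ← sub_smul,
    smul_mul_assoc, ← pow_succ]
  rw [ordinaryHypergeometricCoefficient_contiguous hc]

theorem hasSum_ordinaryHypergeometric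
    (h : Summable fun n ↦ ordinaryHypergeometricSeries 𝔸 a b c n fun _ ↦ z) :
    HasSum (fun n ↦ ordinaryHypergeometricSeries 𝔸 a b c n fun _ ↦ z) (₂F₁ a b c z) :=
  h.hasSum

theorem ordinaryHypergeometric_contiguous [CharZero 𝕂] [T2Space 𝔸] (hc : ∀ n : ℕ, (n : 𝕂) ≠ -c)
    (hpred : Summable fun n ↦ ordinaryHypergeometricSeries 𝔸 (a - 1) b c n fun _ ↦ z)
    (hself : Summable fun n ↦ ordinaryHypergeometricSeries 𝔸 a b c n fun _ ↦ z)
    (hsucc : Summable fun n ↦ ordinaryHypergeometricSeries 𝔸 (a + 1) b c n fun _ ↦ z) :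
    (c - a) • ₂F₁ (a - 1) b c z + (2 * a - c) • ₂F₁ a b c z - a • ₂F₁ (a + 1) b c z
      = ((a - b) • ₂F₁ a b c z - a • ₂F₁ (a + 1) b c z) * z := by
  have hc_poch (n : ℕ) : (ascPochhammer 𝕂 n).eval c ≠ 0 := by
    rw [Ne, ascPochhammer_eval_eq_zero_iff]
    exact fun ⟨k, _, hk⟩ ↦ hc k hk
  have hzero : (c - a) • ordinaryHypergeometricSeries 𝔸 (a - 1) b c 0 (fun _ ↦ z)
      + (2 * a - c) • ordinaryHypergeometricSeries 𝔸 a b c 0 (fun _ ↦ z)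
      - a • ordinaryHypergeometricSeries 𝔸 (a + 1) b c 0 (fun _ ↦ z) = 0 := by
    simp only [ordinaryHypergeometricSeries_apply_eq, ascPochhammer_zero, Polynomial.eval_one,
      Nat.factorial_zero, Nat.cast_one, inv_one, mul_one, pow_zero]
    module
  have hleft := (((hasSum_ordinaryHypergeometric hpred).const_smul (c - a)).add
    ((hasSum_ordinaryHypergeometric hself).const_smul (2 * a - c))).sub
    ((hasSum_ordinaryHypergeometric hsucc).const_smul a)
  have hright := (((hasSum_ordinaryHypergeometric hself).const_smul (a - b)).sub
    ((hasSum_ordinaryHypergeometric hsucc).const_smul a)).mul_right z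
  simp only [← ordinaryHypergeometricSeries_apply_contiguous (hc_poch _)] at hright
  have htail := (hasSum_nat_add_iff' 1).mpr hleft
  rw [Finset.sum_range_one, hzero, sub_zero] at htail
  exact htail.unique hright

theorem summable_ordinaryHypergeometricSeries_neg_natCast (a c : 𝕂) (m : ℕ) (z : 𝔸) :
    Summable fun n ↦ ordinaryHypergeometricSeries 𝔸 a (-m) c n fun _ ↦ z :=
  summable_of_ne_finset_zero (s := Finset.range (m + 1)) fun n hn ↦ by
    rw [ordinaryHypergeometricSeries_eq_zero_of_neg_nat (k := m) a (-m) c (by simp)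
      (by simpa using hn)]
    rfl

theorem ordinaryHypergeometric_neg_natCast_recurrence [TopologicalSpace 𝕂] [IsTopologicalRing 𝕂]
    [T2Space 𝕂] [CharZero 𝕂] {β c : 𝕂} (hβ : ∀ n : ℕ, (n : 𝕂) ≠ -β) (hc : c ≠ 0) (ν : 𝕂) (x : ℕ) :
    c * ((ν + β) * ₂F₁ (-ν - 1) (-x : 𝕂) β (1 - 1 / c)) + ν * ₂F₁ (-ν + 1) (-x : 𝕂) β (1 - 1 / c)
      = ((1 + c) * ν + c * β - (1 - c) * x) * ₂F₁ (-ν) (-x : 𝕂) β (1 - 1 / c) := by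
  have hz : c * (1 - 1 / c) = c - 1 := by field_simp
  have hgauss := ordinaryHypergeometric_contiguous (a := -ν) (z := 1 - 1 / c) hβ
    (summable_ordinaryHypergeometricSeries_neg_natCast _ _ x _)
    (summable_ordinaryHypergeometricSeries_neg_natCast _ _ x _)
    (summable_ordinaryHypergeometricSeries_neg_natCast _ _ x _)
  simp only [smul_eq_mul] at hgauss
  generalize 1 - 1 / c = z at hz hgauss ⊢
  linear_combination c * hgauss
    + ((x - ν) * ₂F₁ (-ν) (-x : 𝕂) β z + ν * ₂F₁ (-ν + 1) (-x : 𝕂) β z) * hz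

end Hypergeometric

theorem poch_eq_ascPochhammer_eval (q : ℝ) (l : ℕ) : poch q l = (ascPochhammer ℝ l).eval q := by
  induction l with
  | zero => simp [poch]
  | succ l ih => rw [poch, Finset.prod_range_succ, ← poch, ih, ascPochhammer_succ_eval]

/-- The weight `(β)_n c ^ n / n!`, whose square root normalises the `n`-th Meixner polynomial. -/
noncomputable def meixnerWeight (β c : ℝ) (n : ℕ) : ℝ := poch β n * c ^ n / n.factorial

theorem meixnerWeight_succ (β c : ℝ) (n : ℕ) :
    (n + 1) * meixnerWeight β c (n + 1) = (n + β) * (c * meixnerWeight β c n) := by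
  have hn : (n : ℝ) + 1 ≠ 0 := by positivity
  simp only [meixnerWeight, poch_eq_ascPochhammer_eval, ascPochhammer_succ_eval,
    Nat.factorial_succ, Nat.cast_mul, Nat.cast_add_one, pow_succ]
  field_simp
  ring

theorem meixner_eq_ordinaryHypergeometric (n x : ℕ) (β c : ℝ) :
    meixner n x β c =
      (-1) ^ n * √(meixnerWeight β c n) * ₂F₁ (-n : ℝ) (-x : ℝ) β (1 - 1 / c) := by
  rw [meixner, meixnerWeight, ordinaryHypergeometric_eq_tsum]
  congr 1
  refine (Finset.sum_congr rfl fun l _ ↦ ?_).trans (tsum_eq_sum fun l hl ↦ ?_).symm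
  · simp only [poch_eq_ascPochhammer_eval, smul_eq_mul]
    ring
  · have hlt : min n x < l := by rwa [Finset.mem_range, not_lt, Nat.succ_le_iff] at hl
    rcases min_lt_iff.mp hlt with h | h <;> simp [ascPochhammer_eval_neg_coe_nat_of_lt h]

theorem sqrt_mul_mul_sqrt_of_mul_eq_mul {p q u v : ℝ} (hp : 0 ≤ p) (hq : 0 ≤ q)
    (h : p * u = q * v) : √(p * q) * √u = q * √v := by
  calc √(p * q) * √u = √(q ^ 2 * v) := by
        rw [← Real.sqrt_mul (mul_nonneg hp hq)]
        congr 1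
        linear_combination q * h
    _ = q * √v := by rw [Real.sqrt_mul (sq_nonneg q), Real.sqrt_sq hq]

section Recurrence

variable {β c : ℝ}

theorem sqrt_mul_meixner_succ (hβ : 0 ≤ β) (hc : 0 ≤ c) (n x : ℕ) :
    √((n + 1) * (n + β)) * meixner (n + 1) x β c =
      -((-1) ^ n * √c * √(meixnerWeight β c n) *
        ((n + β) * ₂F₁ (-n - 1 : ℝ) (-x : ℝ) β (1 - 1 / c))) := by
  have hweight := sqrt_mul_mul_sqrt_of_mul_eq_mul (by positivity) (by positivity)
    (meixnerWeight_succ β c n)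
  rw [Real.sqrt_mul hc] at hweight
  rw [meixner_eq_ordinaryHypergeometric, pow_succ, Nat.cast_add_one, neg_add']
  linear_combination -(-1) ^ n * ₂F₁ (-n - 1 : ℝ) (-x : ℝ) β (1 - 1 / c) * hweight

theorem sqrt_mul_meixner_pred (hβ : 0 ≤ β) (hc : 0 ≤ c) (n x : ℕ) :
    √c * (√(n * (n + β - 1)) * meixner (n - 1) x β c) =
      -((-1) ^ n * √(meixnerWeight β c n) *
        (n * ₂F₁ (-n + 1 : ℝ) (-x : ℝ) β (1 - 1 / c))) := by
  rcases n with _ | n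
  · simp
  have hweight := sqrt_mul_mul_sqrt_of_mul_eq_mul (by positivity) (by positivity)
    (meixnerWeight_succ β c n).symm
  rw [Real.sqrt_mul hc] at hweight
  rw [Nat.add_sub_cancel, meixner_eq_ordinaryHypergeometric, pow_succ, Nat.cast_add_one,
    show (n : ℝ) + 1 + β - 1 = n + β by ring, mul_comm ((n : ℝ) + 1),
    show -((n : ℝ) + 1) + 1 = -n by ring]
  linear_combination (-1) ^ n * ₂F₁ (-n : ℝ) (-x : ℝ) β (1 - 1 / c) * hweight

theorem meixner_recurrence (hβ : 0 < β) (hc : 0 < c) (n x : ℕ) :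
    √c * (√((n + 1) * (n + β)) * meixner (n + 1) x β c)
        + (1 + c) * (n + β / 2) * meixner n x β c
        + √c * (√(n * (n + β - 1)) * meixner (n - 1) x β c)
      = (1 - c) * (x + β / 2) * meixner n x β c := by
  have hrec := ordinaryHypergeometric_neg_natCast_recurrence (β := β)
    (fun l h ↦ by linarith [l.cast_nonneg (α := ℝ)]) hc.ne' n x
  rw [sqrt_mul_meixner_succ hβ.le hc.le, sqrt_mul_meixner_pred hβ.le hc.le,
    meixner_eq_ordinaryHypergeometric]
  linear_combination -(-1) ^ n * √(meixnerWeight β c n) * hrec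
    - (-1) ^ n * √(meixnerWeight β c n) * (n + β) * ₂F₁ (-n - 1 : ℝ) (-x : ℝ) β (1 - 1 / c) *
      Real.sq_sqrt hc.le

end Recurrence

theorem two_mul_sqrt_mul_sqrt_sq_sub_sq {r s c : ℝ} (hr : 0 ≤ r) (hc0 : 0 ≤ c) (hc1 : c ≤ 1)
    (hs : 2 * √c * s = r * (1 + c)) : 2 * √c * √(s ^ 2 - r ^ 2) = r * (1 - c) := by
  calc 2 * √c * √(s ^ 2 - r ^ 2) = √((2 * √c) ^ 2 * (s ^ 2 - r ^ 2)) := by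
        rw [Real.sqrt_mul (sq_nonneg _), Real.sqrt_sq (by positivity)]
    _ = √((r * (1 - c)) ^ 2) := by
        congr 1
        linear_combination (2 * √c * s + r * (1 + c)) * hs - 4 * r ^ 2 * Real.sq_sqrt hc0
    _ = r * (1 - c) := Real.sqrt_sq (mul_nonneg hr (sub_nonneg.mpr hc1))

/-- Meixner polynomials as formal eigenvectors of the su(1,1)
Lax operator in the positive discrete series, hyperbolic case s² − r² > 0
(convention M_{−1} = 0; the coefficient of M_{n−1} vanishes at n = 0). -/
theorem stmt_5 (k r s c C : ℝ) (hk : 0 < k) (hr : 0 < r) (hrs : r < s)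
    (hc0 : 0 < c) (hc1 : c < 1)
    (hceq : (1 + c) / (2 * Real.sqrt c) = s / r)
    (hC : C = Real.sqrt (s ^ 2 - r ^ 2)) :
    ∀ x n : ℕ,
      r * Real.sqrt (((n : ℝ) + 1) * ((n : ℝ) + 2 * k)) * meixner (n + 1) x (2 * k) c
        + 2 * s * ((n : ℝ) + k) * meixner n x (2 * k) c
        + r * Real.sqrt ((n : ℝ) * ((n : ℝ) + 2 * k - 1)) * meixner (n - 1) x (2 * k) c
      = 2 * C * ((x : ℝ) + k) * meixner n x (2 * k) c := by
  intro x n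
  have hsqrt : 0 < √c := Real.sqrt_pos.mpr hc0
  have hs : 2 * √c * s = r * (1 + c) := by
    rw [div_eq_div_iff (by positivity) hr.ne'] at hceq
    linear_combination -hceq
  have hC' : 2 * √c * C = r * (1 - c) :=
    hC ▸ two_mul_sqrt_mul_sqrt_sq_sub_sq hr.le hc0.le hc1.le hs
  have hrec := meixner_recurrence (mul_pos two_pos hk) hc0 n x
  apply mul_left_cancel₀ hsqrt.ne'
  linear_combination r * hrec + (n + k) * meixner n x (2 * k) c * hs
    - (x + k) * meixner n x (2 * k) c * hC'
end

section
/- Let c, r be nonzero real numbers, h > 0, k ≥ 0 and s ∈ ℝ. Set a = hr²/(4c²) and σ = sgn(r/c) ∈ {1, −1}. Then for every x ∈ ℕ, the sequence f_n = (−σ)^n C_n(x; a), n ∈ ℕ, satisfies r√(hn) f_{n−1} + (2c(n+k) − hs) f_n + r√(h(n+1)) f_{n+1} = (2c(x+k) − h(r²/(2c) + s)) · f_n for all n ∈ ℕ (with f_{−1} = 0), where C_n(x; a) are the orthonormal Charlier polynomials. That is, f is a formal eigenvector of the Jacobi operator π_{k,h}(L) : e_n ↦ r√(h(n+1)) e_{n+1}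 + (2c(n+k) − hs) e_n + r√(hn) e_{n−1} with eigenvalue 2c(x+k) − h·(r²/(2c) + s); here r²/(2c) + s is the invariant of the flow ṡ = 2ru, ṙ = −2cu. -/
/-- Orthonormal Charlier polynomials
C_n(x; a) = √(a^n / n!) Σ_l (−n)_l (−x)_l / l! (−1/a)^l. -/
noncomputable def charlier (n x : ℕ) (a : ℝ) : ℝ :=
  Real.sqrt (a ^ n / n.factorial) *
    ∑ l ∈ Finset.range (min n x + 1),
      poch (-(n : ℝ)) l * poch (-(x : ℝ)) l / (l.factorial : ℝ) * (-1 / a) ^ l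

/-!
Write `C_n(x; a) = √(aⁿ/n!) P_n(x)` with `P_n(x) = ₂F₀(-n, -x; ; -1/a)`. The contiguous relation for
`₂F₀` in its first parameter telescopes on partial sums, and at a negative integer parameter the
series terminates, so that `a P_{n+1} + n P_{n-1} = (n + a - x) P_n` for every real `x`. The weights
satisfy `√(n+1) √(aⁿ⁺¹/(n+1)!) = √a √(aⁿ/n!)`, which symmetrizes this to a Jacobi recurrence with
off-diagonal entries `√(a(n+1))`. Since `r√h = 2cσ√a`, conjugation by `diag((-σ)ⁿ)` and scaling by
`2c` turn it, up to a scalar shift, into the Lax operator.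
-/

section TwoFZero

open Polynomial

theorem mul_ascPochhammer_eval_add_one {R : Type*} [CommSemiring R] (q : R) (l : ℕ) :
    q * (ascPochhammer R l).eval (q + 1) = (q + l) * (ascPochhammer R l).eval q := by
  have h_left : (ascPochhammer R (l + 1)).eval q = q * (ascPochhammer R l).eval (q + 1) := by
    simp [ascPochhammer_succ_left]
  rw [← h_left, ascPochhammer_succ_eval, mul_comm]

theorem ascPochhammer_succ_eval_sub_one {R : Type*} [CommRing R] (q : R) (l : ℕ) :
    (ascPochhammer R (l + 1)).eval (q - 1) = (q - 1) * (ascPochhammer R l).eval q := by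
  simp [ascPochhammer_succ_left]

variable {K : Type*} [Field K]

/-- The `l`-th term of the formal hypergeometric series `₂F₀(q, b; ; z)`. -/
noncomputable def twoFZeroTerm (q b z : K) (l : ℕ) : K :=
  (ascPochhammer K l).eval q * (ascPochhammer K l).eval b / (l.factorial : K) * z ^ l

/-- The sum of the first `M` terms of `₂F₀(q, b; ; z)`. Partial sums stand in for the
series, which is divergent in general. -/
noncomputable def twoFZeroPartialSum (q b z : K) (M : ℕ) : K :=
  ∑ l ∈ Finset.range M, twoFZeroTerm q b z l

theorem twoFZeroTerm_zero (q b z : K) : twoFZeroTerm q b z 0 = 1 := by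
  simp [twoFZeroTerm]

theorem twoFZeroTerm_comm (q b z : K) (l : ℕ) : twoFZeroTerm q b z l = twoFZeroTerm b q z l := by
  rw [twoFZeroTerm, twoFZeroTerm, mul_comm (eval q _)]

theorem twoFZeroTerm_neg_natCast_of_lt {n l : ℕ} (h : n < l) (b z : K) :
    twoFZeroTerm (-(n : K)) b z l = 0 := by
  simp [twoFZeroTerm, ascPochhammer_eval_neg_coe_nat_of_lt h]

theorem twoFZeroPartialSum_neg_natCast {n M : ℕ} (h : n < M) (b z : K) :
    twoFZeroPartialSum (-(n : K)) b z M = twoFZeroPartialSum (-(n : K)) b z (n + 1) := by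
  refine (Finset.sum_subset (Finset.range_subset_range.2 h) fun l _ hl => ?_).symm
  exact twoFZeroTerm_neg_natCast_of_lt (by simpa using hl) b z

theorem twoFZeroTerm_contiguous [CharZero K] (q b z : K) (l : ℕ) :
    twoFZeroTerm (q - 1) b z (l + 1) - (1 + (q - b) * z) * twoFZeroTerm q b z (l + 1)
        + q * z * twoFZeroTerm (q + 1) b z (l + 1)
      = (b + (l + 1 : ℕ)) * z * twoFZeroTerm q b z (l + 1)
        - (b + l) * z * twoFZeroTerm q b z l := by
  have h_up := mul_ascPochhammer_eval_add_one q (l + 1)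
  have h_fact : (l.factorial : K) ≠ 0 := Nat.cast_ne_zero.2 l.factorial_ne_zero
  have h_succ : (l : K) + 1 ≠ 0 := Nat.cast_add_one_ne_zero l
  simp only [twoFZeroTerm, ascPochhammer_succ_eval_sub_one, Nat.factorial_succ, pow_succ]
  rw [ascPochhammer_succ_eval l b]
  rw [ascPochhammer_succ_eval l q] at h_up ⊢
  push_cast at h_up ⊢
  field_simp
  linear_combination (ascPochhammer K l).eval b * (b + l) * z ^ (l + 2) * h_up

theorem twoFZeroPartialSum_contiguous [CharZero K] (q b z : K) (M : ℕ) :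
    twoFZeroPartialSum (q - 1) b z (M + 1) - (1 + (q - b) * z) * twoFZeroPartialSum q b z (M + 1)
        + q * z * twoFZeroPartialSum (q + 1) b z (M + 1)
      = (b + M) * z * twoFZeroTerm q b z M := by
  induction M with
  | zero =>
    simp only [twoFZeroPartialSum, zero_add, Finset.sum_range_one, twoFZeroTerm_zero, Nat.cast_zero]
    ring
  | succ M ih =>
    have h_split (p : K) : twoFZeroPartialSum p b z (M + 1 + 1)
        = twoFZeroPartialSum p b z (M + 1) + twoFZeroTerm p b z (M + 1) :=
      Finset.sum_range_succ _ _
    rw [h_split, h_split, h_split]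
    linear_combination ih + twoFZeroTerm_contiguous q b z M

/-- The Charlier polynomial `₂F₀(-n, -x; ; -1/a)`, normalized to take the value `1` at `x = 0`. -/
noncomputable def charlierTwoFZero (n : ℕ) (x a : K) : K :=
  twoFZeroPartialSum (-(n : K)) (-x) (-1 / a) (n + 1)

theorem charlierTwoFZero_recurrence [CharZero K] {a : K} (ha : a ≠ 0) (n : ℕ) (x : K) :
    n * charlierTwoFZero (n - 1) x a + a * charlierTwoFZero (n + 1) x a
      = (n + a - x) * charlierTwoFZero n x a := by
  have h_extend {m : ℕ} (hm : m < n + 2) :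
      charlierTwoFZero m x a = twoFZeroPartialSum (-(m : K)) (-x) (-1 / a) (n + 2) :=
    (twoFZeroPartialSum_neg_natCast hm _ _).symm
  have h_pred : n * charlierTwoFZero (n - 1) x a
      = n * twoFZeroPartialSum (-(n : K) + 1) (-x) (-1 / a) (n + 2) := by
    rcases n with _ | n
    · simp
    · rw [h_extend (by lia)]
      simp
  have h_contiguous := twoFZeroPartialSum_contiguous (-(n : K)) (-x) (-1 / a) (n + 1)
  rw [twoFZeroTerm_neg_natCast_of_lt n.lt_succ_self, mul_zero] at h_contiguous
  have h_inv : a * (-1 / a) = -1 := mul_div_cancel₀ _ ha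
  rw [h_pred, h_extend (m := n + 1) (by lia), h_extend (m := n) (by lia), Nat.cast_succ, neg_add']
  linear_combination a * h_contiguous
    + (x - n) * twoFZeroPartialSum (-(n : K)) (-x) (-1 / a) (n + 2) * h_inv
    + n * twoFZeroPartialSum (-(n : K) + 1) (-x) (-1 / a) (n + 2) * h_inv

end TwoFZero

section OrthonormalCharlier

theorem sqrt_succ_mul_sqrt_pow_succ_div_factorial {a : ℝ} (ha : 0 ≤ a) (n : ℕ) :
    √((n : ℝ) + 1) * √(a ^ (n + 1) / (n + 1).factorial) = √a * √(a ^ n / n.factorial) := by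
  rw [← Real.sqrt_mul (by positivity), ← Real.sqrt_mul ha, Nat.factorial_succ]
  congr 1
  push_cast
  field_simp
  ring

/-- The orthonormal Charlier polynomial `C_n(x; a)` at a real argument `x`. -/
noncomputable def orthonormalCharlier (n : ℕ) (x a : ℝ) : ℝ :=
  √(a ^ n / n.factorial) * charlierTwoFZero n x a

theorem charlier_eq_orthonormalCharlier (n x : ℕ) (a : ℝ) :
    charlier n x a = orthonormalCharlier n x a := by
  simp only [charlier, orthonormalCharlier, poch_eq_ascPochhammer_eval]
  congr 1
  refine Finset.sum_subset (Finset.range_subset_range.2 (by lia)) fun l hl hl' => ?_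
  have hxl : x < l := by grind
  exact (twoFZeroTerm_comm _ _ _ _).trans (twoFZeroTerm_neg_natCast_of_lt hxl _ _)

theorem orthonormalCharlier_recurrence {a : ℝ} (ha : 0 < a) (n : ℕ) (x : ℝ) :
    √(a * n) * orthonormalCharlier (n - 1) x a + √(a * (n + 1)) * orthonormalCharlier (n + 1) x a
      = (n + a - x) * orthonormalCharlier n x a := by
  have h_succ :
      √(a * (n + 1)) * √(a ^ (n + 1) / (n + 1).factorial) = a * √(a ^ n / n.factorial) := by
    rw [Real.sqrt_mul ha.le, mul_assoc, sqrt_succ_mul_sqrt_pow_succ_div_factorial ha.le,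
      ← mul_assoc, Real.mul_self_sqrt ha.le]
  have h_pred : √(a * n) * √(a ^ (n - 1) / (n - 1).factorial) = n * √(a ^ n / n.factorial) := by
    rcases n with _ | n
    · simp
    · rw [Nat.add_sub_cancel, Nat.cast_succ, mul_comm a, Real.sqrt_mul (by positivity), mul_assoc,
        ← sqrt_succ_mul_sqrt_pow_succ_div_factorial ha.le, ← mul_assoc,
        Real.mul_self_sqrt (by positivity)]
  simp only [orthonormalCharlier]
  linear_combination charlierTwoFZero (n - 1) x a * h_pred + charlierTwoFZero (n + 1) x a * h_succ
    + √(a ^ n / n.factorial) * charlierTwoFZero_recurrence ha.ne' n x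

theorem alternating_orthonormalCharlier_recurrence {a σ : ℝ} (ha : 0 < a) (hσ : σ ^ 2 = 1)
    (n : ℕ) (x : ℝ) :
    σ * √(a * n) * ((-σ) ^ (n - 1) * orthonormalCharlier (n - 1) x a)
        + σ * √(a * (n + 1)) * ((-σ) ^ (n + 1) * orthonormalCharlier (n + 1) x a)
      = (x - n - a) * ((-σ) ^ n * orthonormalCharlier n x a) := by
  have h_pred : σ * √(a * n) * (-σ) ^ (n - 1) = -(-σ) ^ n * √(a * n) := by
    rcases n with _ | n
    · simp
    · rw [Nat.add_sub_cancel, pow_succ]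
      ring
  have h_succ : σ * (-σ) ^ (n + 1) = -(-σ) ^ n := by
    linear_combination -(-σ) ^ n * hσ
  linear_combination orthonormalCharlier (n - 1) x a * h_pred
    + √(a * (n + 1)) * orthonormalCharlier (n + 1) x a * h_succ
    - (-σ) ^ n * orthonormalCharlier_recurrence ha n x

end OrthonormalCharlier

theorem realSign_mul_abs (t : ℝ) : Real.sign t * |t| = t := by
  rcases lt_trichotomy t 0 with ht | rfl | ht
  · rw [Real.sign_of_neg ht, abs_of_neg ht, neg_one_mul, neg_neg]
  · simp
  · rw [Real.sign_of_pos ht, abs_of_pos ht, one_mul]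

theorem mul_sqrt_eq_sign_mul_sqrt {c : ℝ} (hc : c ≠ 0) (r : ℝ) {h : ℝ} (hh : 0 ≤ h) :
    r * √h = 2 * c * Real.sign (r / c) * √(h * r ^ 2 / (4 * c ^ 2)) := by
  have h_sqrt : √(h * r ^ 2 / (4 * c ^ 2)) = √h * (|r / c| / 2) := by
    rw [show h * r ^ 2 / (4 * c ^ 2) = h * (r / c / 2) ^ 2 by ring, Real.sqrt_mul hh,
      Real.sqrt_sq_eq_abs, abs_div, abs_two]
  calc r * √h = c * (r / c) * √h := by rw [mul_div_cancel₀ r hc]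
    _ = c * (Real.sign (r / c) * |r / c|) * √h := by rw [realSign_mul_abs]
    _ = 2 * c * Real.sign (r / c) * √(h * r ^ 2 / (4 * c ^ 2)) := by rw [h_sqrt]; ring

theorem stmt_9_general (c r h k s : ℝ) (hc : c ≠ 0) (hr : r ≠ 0) (hh : 0 < h)
    (a σ : ℝ) (ha : a = h * r ^ 2 / (4 * c ^ 2)) (hσ : σ = Real.sign (r / c)) :
    (σ = 1 ∨ σ = -1) ∧
    ∀ (x : ℝ) (n : ℕ),
      r * √(h * n) * ((-σ) ^ (n - 1) * orthonormalCharlier (n - 1) x a)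
        + (2 * c * (n + k) - h * s) * ((-σ) ^ n * orthonormalCharlier n x a)
        + r * √(h * (n + 1)) * ((-σ) ^ (n + 1) * orthonormalCharlier (n + 1) x a)
      = (2 * c * (x + k) - h * (r ^ 2 / (2 * c) + s))
          * ((-σ) ^ n * orthonormalCharlier n x a) := by
  have h_sign : σ = 1 ∨ σ = -1 :=
    hσ ▸ (Real.sign_apply_eq_of_ne_zero _ (div_ne_zero hr hc)).symm
  have ha_pos : 0 < a := by rw [ha]; positivity
  have h_scale (y : ℝ) : r * √(h * y) = 2 * c * (σ * √(a * y)) := by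
    rw [Real.sqrt_mul hh.le, Real.sqrt_mul ha_pos.le, ← mul_assoc,
      mul_sqrt_eq_sign_mul_sqrt hc r hh.le, ← ha, ← hσ]
    ring
  have h_shift : h * (r ^ 2 / (2 * c)) = 2 * c * a := by rw [ha]; field_simp; norm_num
  refine ⟨h_sign, fun x n => ?_⟩
  rw [h_scale, h_scale]
  linear_combination
    2 * c * alternating_orthonormalCharlier_recurrence ha_pos (sq_eq_one_iff.2 h_sign) n x
      + (-σ) ^ n * orthonormalCharlier n x a * h_shift

/-- Charlier polynomials as formal eigenvectors of the oscillator
algebra Lax operator (convention f_{−1} = 0; the coefficient of f_{n−1}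
vanishes at n = 0). -/
theorem stmt_9 (c r h k s : ℝ) (hc : c ≠ 0) (hr : r ≠ 0) (hh : 0 < h) (hk : 0 ≤ k)
    (a σ : ℝ) (ha : a = h * r ^ 2 / (4 * c ^ 2)) (hσ : σ = Real.sign (r / c)) :
    (σ = 1 ∨ σ = -1) ∧
    ∀ x n : ℕ,
      r * Real.sqrt (h * (n : ℝ)) * ((-σ) ^ (n - 1) * charlier (n - 1) x a)
        + (2 * c * ((n : ℝ) + k) - h * s) * ((-σ) ^ n * charlier n x a)
        + r * Real.sqrt (h * ((n : ℝ) + 1)) * ((-σ) ^ (n + 1) * charlier (n + 1) x a)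
      = (2 * c * ((x : ℝ) + k) - h * (r ^ 2 / (2 * c) + s)) * ((-σ) ^ n * charlier n x a) := by
  simpa only [charlier_eq_orthonormalCharlier] using
    (stmt_9_general c r h k s hc hr hh a σ ha hσ).imp_right fun h_eigen (x : ℕ) => h_eigen x
end

section
/- For every z ∈ ℝ and all n, n' ∈ ℤ, the Hansen–Lommel orthogonality relations hold: Σ_{m∈ℤ} J_{m−n}(z) J_{m−n'}(z) = δ_{n,n'} (the family (J_{m−n}(z)J_{m−n'}(z))_{m∈ℤ} being summable). Consequently, for c ≠ 0, k > 0, r ∈ ℝ, the operator U on ℓ²(ℤ) defined by (U e_n)(m) = J_{m−n}(kr/c) is unitary. -/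
/-- Bessel function of natural order: J_n(z) = Σ_l (−1)^l (z/2)^{n+2l} / (l! (n+l)!). -/
noncomputable def besselJNat (n : ℕ) (z : ℝ) : ℝ :=
  ∑' l : ℕ, (-1) ^ l * (z / 2) ^ (n + 2 * l) / ((l.factorial : ℝ) * ((n + l).factorial : ℝ))

/-- Bessel function of integer order, with J_{−n}(z) = (−1)^n J_n(z). -/
noncomputable def besselJ (n : ℤ) (z : ℝ) : ℝ :=
  if 0 ≤ n then besselJNat n.toNat z else (-1) ^ ((-n).toNat) * besselJNat ((-n).toNat) z

/-!
Let `S` be the bilateral shift of `ℓ²(ℤ)`. As `S - S⁻¹ = S - S*` is skew-adjoint,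
`U = exp ((z / 2) (S - S⁻¹))` is unitary. Multiplying the series of `exp ((z / 2) u)` and
`exp (-(z / 2) u⁻¹)` and collecting the powers of `u` gives the generating function
`exp ((z / 2) (u - u⁻¹)) = ∑ₖ Jₖ(z) uᵏ` for a unit `u` of any real Banach algebra. At `u = S` it
says that `U` has matrix entries `Jₘ₋ₙ(z)`, and the Hansen–Lommel relations are Parseval's identity
for the inner products of the vectors `U eₙ`.
-/

open NormedSpace
open scoped Nat

section GeneratingFunction

/-- The pairs `(a, b)` of natural numbers, indexed by their difference `k = a - b` and their
minimum `l`. It sorts the terms of a double power series by the Bessel function they belong to. -/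
def intProdNatEquivNatProdNat : ℤ × ℕ ≃ ℕ × ℕ where
  toFun p := (p.1.toNat + p.2, (-p.1).toNat + p.2)
  invFun q := (q.1 - q.2, min q.1 q.2)
  left_inv p := by ext <;> dsimp only <;> omega
  right_inv q := by ext <;> dsimp only <;> omega

theorem intProdNatEquivNatProdNat_sub (p : ℤ × ℕ) :
    ((intProdNatEquivNatProdNat p).1 - (intProdNatEquivNatProdNat p).2 : ℤ) = p.1 := by
  simp only [intProdNatEquivNatProdNat, Equiv.coe_fn_mk]
  omega

/-- The coefficient of `uᵃ vᵇ` in the expansion of `exp (x u) exp (-x v)`, at `(a, b)`. -/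
noncomputable def expMulExpNegCoeff (x : ℝ) (q : ℕ × ℕ) : ℝ :=
  x ^ q.1 / q.1 ! * ((-x) ^ q.2 / q.2 !)

theorem summable_expMulExpNegCoeff (x : ℝ) : Summable (expMulExpNegCoeff x) :=
  summable_mul_of_summable_norm (Real.summable_pow_div_factorial x).norm
    (Real.summable_pow_div_factorial (-x)).norm

theorem besselJ_eq_tsum (k : ℤ) (z : ℝ) :
    besselJ k z = ∑' l : ℕ, expMulExpNegCoeff (z / 2) (intProdNatEquivNatProdNat (k, l)) := by
  simp only [besselJ, besselJNat, expMulExpNegCoeff, intProdNatEquivNatProdNat, Equiv.coe_fn_mk]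
  split_ifs with hk
  · have hk' : (-k).toNat = 0 := by omega
    refine tsum_congr fun l ↦ ?_
    rw [hk', zero_add, neg_pow (z / 2)]
    ring
  · have hk' : k.toNat = 0 := by omega
    rw [← tsum_mul_left]
    refine tsum_congr fun l ↦ ?_
    rw [hk', zero_add, neg_pow (z / 2)]
    ring

theorem hasSum_besselJ (k : ℤ) (z : ℝ) :
    HasSum (fun l : ℕ ↦ expMulExpNegCoeff (z / 2) (intProdNatEquivNatProdNat (k, l)))
      (besselJ k z) := by
  rw [besselJ_eq_tsum]
  exact ((summable_expMulExpNegCoeff (z / 2)).comp_injective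
    (intProdNatEquivNatProdNat.injective.comp (Prod.mk_right_injective k))).hasSum

variable {A : Type*}

theorem expMulExpNegCoeff_smul_zpow [Ring A] [Algebra ℝ A] (u : Aˣ) (x : ℝ) (q : ℕ × ℕ) :
    expMulExpNegCoeff x q • (↑(u ^ (q.1 - q.2 : ℤ)) : A) =
      ((q.1 !⁻¹ : ℝ) • (x • (u : A)) ^ q.1) * ((q.2 !⁻¹ : ℝ) • ((-x) • (↑u⁻¹ : A)) ^ q.2) := by
  rw [zpow_sub, zpow_natCast, zpow_natCast, ← inv_pow, Units.val_mul, Units.val_pow_eq_pow_val,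
    Units.val_pow_eq_pow_val, smul_pow, smul_pow, smul_smul, smul_smul, smul_mul_smul_comm]
  congr 1
  rw [expMulExpNegCoeff]
  ring

variable [NormedRing A] [CompleteSpace A]

theorem hasSum_exp_mul_exp (𝕜 : Type*) [RCLike 𝕜] [NormedAlgebra 𝕜 A] (v w : A) :
    HasSum (fun q : ℕ × ℕ ↦ ((q.1 !⁻¹ : 𝕜) • v ^ q.1) * ((q.2 !⁻¹ : 𝕜) • w ^ q.2))
      (exp v * exp w) := by
  have hsummable := summable_mul_of_summable_norm (norm_expSeries_summable' (𝕂 := 𝕜) v)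
    (norm_expSeries_summable' (𝕂 := 𝕜) w)
  have hmul :=
    (exp_series_hasSum_exp' (𝕂 := 𝕜) v).mul (exp_series_hasSum_exp' (𝕂 := 𝕜) w) hsummable
  exact hmul

variable [NormedAlgebra ℝ A]

theorem exp_smul_sub_inv (u : Aˣ) (x : ℝ) :
    exp (x • ((u : A) - ↑u⁻¹)) = exp (x • (u : A)) * exp ((-x) • (↑u⁻¹ : A)) := by
  let _ : NormedAlgebra ℚ A := NormedAlgebra.restrictScalars ℚ ℝ A
  have hcomm : Commute (u : A) ↑u⁻¹ := (Commute.refl u).inv_right.units_val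
  rw [← exp_add_of_commute ((hcomm.smul_left x).smul_right (-x)), smul_sub, neg_smul,
    sub_eq_add_neg]

theorem hasSum_expMulExpNegCoeff_smul_zpow (u : Aˣ) (x : ℝ) :
    HasSum (fun q : ℕ × ℕ ↦ expMulExpNegCoeff x q • (↑(u ^ (q.1 - q.2 : ℤ)) : A))
      (exp (x • ((u : A) - ↑u⁻¹))) := by
  simp only [expMulExpNegCoeff_smul_zpow, exp_smul_sub_inv]
  exact hasSum_exp_mul_exp ℝ (x • (u : A)) ((-x) • (↑u⁻¹ : A))

theorem hasSum_besselJ_smul_zpow (u : Aˣ) (z : ℝ) :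
    HasSum (fun k : ℤ ↦ besselJ k z • (↑(u ^ k) : A)) (exp ((z / 2) • ((u : A) - ↑u⁻¹))) := by
  have hsum := intProdNatEquivNatProdNat.hasSum_iff.2 (hasSum_expMulExpNegCoeff_smul_zpow u (z / 2))
  refine hsum.prod_fiberwise fun k ↦ ?_
  simpa only [Function.comp_apply, intProdNatEquivNatProdNat_sub] using
    (hasSum_besselJ k z).smul_const (↑(u ^ k) : A)

end GeneratingFunction

section Shift

variable {𝕜 H ι ι' : Type*} [RCLike 𝕜]

/-- The standard Hilbert basis `eᵢ = lp.single 2 i 1` of `ℓ²(ι, 𝕜)`. -/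
noncomputable def lpHilbertBasis (ι 𝕜 : Type*) [RCLike 𝕜] :
    HilbertBasis ι 𝕜 (lp (fun _ : ι ↦ 𝕜) 2) :=
  ⟨LinearIsometryEquiv.refl 𝕜 _⟩

theorem lpHilbertBasis_apply [DecidableEq ι] (i : ι) :
    lpHilbertBasis ι 𝕜 i = lp.single 2 i (1 : 𝕜) := by
  rw [← HilbertBasis.repr_symm_single]
  rfl

variable [NormedAddCommGroup H] [InnerProductSpace 𝕜 H] [CompleteSpace H]

/-- A Hilbert basis relabelled along a bijection of index types. -/
noncomputable def reindexHilbertBasis (b : HilbertBasis ι 𝕜 H) (σ : ι ≃ ι') :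
    HilbertBasis ι' 𝕜 H :=
  HilbertBasis.mk (v := b ∘ σ.symm) (b.orthonormal.comp _ σ.symm.injective)
    (by rw [σ.symm.surjective.range_comp, b.dense_span])

theorem reindexHilbertBasis_apply (b : HilbertBasis ι 𝕜 H) (σ : ι ≃ ι') (i : ι') :
    reindexHilbertBasis b σ i = b (σ.symm i) := by
  rw [reindexHilbertBasis, HilbertBasis.coe_mk, Function.comp_apply]

/-- The bilateral shift `b n ↦ b (n + 1)` of a Hilbert basis indexed by `ℤ`. -/
noncomputable def bilateralShift (b : HilbertBasis ℤ 𝕜 H) : H ≃ₗᵢ[𝕜] H :=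
  b.repr.trans (reindexHilbertBasis b (Equiv.subRight 1)).repr.symm

theorem bilateralShift_apply (b : HilbertBasis ℤ 𝕜 H) (n : ℤ) :
    bilateralShift b (b n) = b (n + 1) := by
  simp [bilateralShift, HilbertBasis.repr_self, reindexHilbertBasis_apply]

theorem bilateralShift_zpow_apply (b : HilbertBasis ℤ 𝕜 H) (k n : ℤ) :
    (bilateralShift b ^ k) (b n) = b (n + k) := by
  induction k generalizing n with
  | zero => simp
  | succ k ih =>
    rw [zpow_add_one, LinearIsometryEquiv.coe_mul, Function.comp_apply, bilateralShift_apply, ih]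
    congr 1
    ring
  | pred k ih =>
    have hinv : (bilateralShift b)⁻¹ (b n) = b (n - 1) := by
      rw [LinearIsometryEquiv.inv_def, LinearIsometryEquiv.symm_apply_eq, bilateralShift_apply,
        sub_add_cancel]
    rw [zpow_sub_one, LinearIsometryEquiv.coe_mul, Function.comp_apply, hinv, ih]
    congr 1
    ring

end Shift

section BesselOperator

variable {H : Type*} [NormedAddCommGroup H] [InnerProductSpace ℝ H] [CompleteSpace H]

/-- The unitary operator `exp ((z / 2) (S - S⁻¹))`, where `S` is the bilateral shift. Its matrix in
the basis `b` is the Laurent matrix of the Bessel functions `Jₘ₋ₙ(z)`. -/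
noncomputable def besselUnitary (b : HilbertBasis ℤ ℝ H) (z : ℝ) : unitary (H →L[ℝ] H) :=
  let S : unitary (H →L[ℝ] H) := Unitary.linearIsometryEquiv.symm (bilateralShift b)
  ⟨exp ((z / 2) • ((S : H →L[ℝ] H) - star (S : H →L[ℝ] H))), by
    let _ : NormedAlgebra ℚ (H →L[ℝ] H) := NormedAlgebra.restrictScalars ℚ ℝ (H →L[ℝ] H)
    refine exp_mem_unitary_of_mem_skewAdjoint (skewAdjoint.smul_mem _ ?_)
    rw [skewAdjoint.mem_iff, star_sub, star_star, neg_sub]⟩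

theorem hasSum_besselUnitary_apply (b : HilbertBasis ℤ ℝ H) (z : ℝ) (n : ℤ) :
    HasSum (fun m : ℤ ↦ besselJ (m - n) z • b m) ((besselUnitary b z : H →L[ℝ] H) (b n)) := by
  let S : (H →L[ℝ] H)ˣ := Unitary.toUnits (Unitary.linearIsometryEquiv.symm (bilateralShift b))
  have zpow_apply (k : ℤ) : (↑(S ^ k) : H →L[ℝ] H) (b n) = b (n + k) := by
    rw [← bilateralShift_zpow_apply, ← map_zpow, ← map_zpow]
    rfl
  have hS := (hasSum_besselJ_smul_zpow S z).mapL (ContinuousLinearMap.apply ℝ H (b n))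
  simp only [ContinuousLinearMap.apply_apply, smul_apply, zpow_apply] at hS
  simpa [Function.comp_def] using! (Equiv.subRight n).hasSum_iff.2 hS

theorem inner_besselUnitary_apply (b : HilbertBasis ℤ ℝ H) (z : ℝ) (m n : ℤ) :
    inner ℝ (b m) ((besselUnitary b z : H →L[ℝ] H) (b n)) = besselJ (m - n) z := by
  have hinner := (hasSum_besselUnitary_apply b z n).mapL (innerSL ℝ (b m))
  simp only [innerSL_apply_apply, inner_smul_right, orthonormal_iff_ite.1 b.orthonormal,
    mul_ite, mul_one, mul_zero] at hinner
  simpa only [eq_comm (a := m), tsum_ite_eq] using hinner.tsum_eq.symm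

theorem hasSum_besselJ_mul_besselJ (z : ℝ) (n n' : ℤ) :
    HasSum (fun m : ℤ ↦ besselJ (m - n) z * besselJ (m - n') z) (if n = n' then 1 else 0) := by
  let b := lpHilbertBasis ℤ ℝ
  let U := besselUnitary b z
  have hparseval := b.hasSum_inner_mul_inner (U.1 (b n)) (U.1 (b n'))
  simpa only [Unitary.inner_map_map, real_inner_comm (b _) (U.1 _), U,
    inner_besselUnitary_apply, orthonormal_iff_ite.1 b.orthonormal] using hparseval

end BesselOperator

/-- Hansen–Lommel orthogonality relations for Bessel functions,
and unitarity of the operator U on ℓ²(ℤ) with (U e_n)(m) = J_{m−n}(kr/c). -/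
theorem stmt_12 :
    (∀ (z : ℝ) (n n' : ℤ),
      Summable (fun m : ℤ => besselJ (m - n) z * besselJ (m - n') z) ∧
      (∑' m : ℤ, besselJ (m - n) z * besselJ (m - n') z) = if n = n' then 1 else 0) ∧
    (∀ c k r : ℝ, c ≠ 0 → 0 < k →
      ∃ U : lp (fun _ : ℤ => ℝ) 2 ≃ₗᵢ[ℝ] lp (fun _ : ℤ => ℝ) 2,
        ∀ n m : ℤ, (U (lp.single 2 n (1 : ℝ)) : ∀ _ : ℤ, ℝ) m = besselJ (m - n) (k * r / c)) := by
  refine ⟨fun z n n' ↦ ⟨(hasSum_besselJ_mul_besselJ z n n').summable,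
    (hasSum_besselJ_mul_besselJ z n n').tsum_eq⟩, fun c k r _ _ ↦ ?_⟩
  let b := lpHilbertBasis ℤ ℝ
  refine ⟨Unitary.linearIsometryEquiv (besselUnitary b (k * r / c)), fun n m ↦ ?_⟩
  rw [← lpHilbertBasis_apply, ← inner_besselUnitary_apply b, ← b.repr_apply_apply]
  rfl
end

section
/- Let r, s : [0,∞) → ℝ be continuously differentiable and u : [0,∞) → ℝ continuous, with ṡ(t) = 2u(t)r(t), ṙ(t) = −2u(t)s(t), and r(t) > 0 for all t ≥ 0. Set C = √(s(0)² + r(0)²). Then s(t)² + r(t)² = C² and C − s(t) > 0 for all t ≥ 0, and the modification function m(t) = (C + s(t))/(C − s(t)) satisfies ṁ(t)/m(t) = 4C·u(t)/r(t); equivalently m(t) = m(0) · exp(4C ∫_0^t u(τ)/r(τ) dτ) for all t ≥ 0. -/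
/-!
The flow of `ṡ = 2ur`, `ṙ = −2us` is a rotation of the `(s, r)`-plane, so `s² + r² = C²` is
conserved. As long as `r ≠ 0` this factors as `r² = (C + s)(C − s)` with both factors positive. The
logarithmic derivative of `m = (C + s)/(C − s)` is `2Cṡ/((C + s)(C − s)) = 2C · 2ur/r² = 4Cu/r`, and
integrating it gives the exponential formula.
-/

open MeasureTheory Set

theorem abs_lt_of_sq_add_sq_eq_sq {R : Type*} [CommRing R] [LinearOrder R] [IsStrictOrderedRing R]
    {x y c : R} (hc : 0 ≤ c) (hy : y ≠ 0) (h : x ^ 2 + y ^ 2 = c ^ 2) : |x| < c :=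
  abs_lt_of_sq_lt_sq (h ▸ lt_add_of_pos_right _ (by positivity)) hc

theorem eq_of_hasDerivWithinAt_eq_zero {𝕜 E : Type*} [RCLike 𝕜] [NormedAddCommGroup E]
    [NormedSpace 𝕜 E] {f : 𝕜 → E} {J : Set 𝕜} (hJ : Convex ℝ J)
    (hf : ∀ t ∈ J, HasDerivWithinAt f 0 J t) {a b : 𝕜} (ha : a ∈ J) (hb : b ∈ J) : f b = f a := by
  have hle : ‖f b - f a‖ ≤ 0 * ‖b - a‖ :=
    hJ.norm_image_sub_le_of_norm_hasDerivWithin_le hf (fun _ _ => norm_zero.le) ha hb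
  rwa [zero_mul, norm_le_zero_iff, sub_eq_zero] at hle

theorem eq_mul_exp_integral_of_hasDerivAt {f g : ℝ → ℝ} {a b : ℝ}
    (hf : ∀ t ∈ uIcc a b, HasDerivAt f (g t * f t) t) (hpos : ∀ t ∈ uIcc a b, 0 < f t)
    (hg : IntervalIntegrable g volume a b) :
    f b = f a * Real.exp (∫ t in a..b, g t) := by
  have hlog : ∀ t ∈ uIcc a b, HasDerivAt (fun τ => Real.log (f τ)) (g t) t := fun t ht => by
    simpa only [mul_div_cancel_right₀ _ (hpos t ht).ne'] using (hf t ht).log (hpos t ht).ne'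
  have hfa := hpos a left_mem_uIcc
  have hfb := hpos b right_mem_uIcc
  rw [intervalIntegral.integral_eq_sub_of_hasDerivAt hlog hg, Real.exp_sub, Real.exp_log hfa,
    Real.exp_log hfb, mul_div_cancel₀ _ hfa.ne']

theorem hasDerivAt_add_div_sub_of_sq_add_sq_eq_sq {𝕜 : Type*} [NontriviallyNormedField 𝕜]
    {s : 𝕜 → 𝕜} {C r t u : 𝕜} (hs : HasDerivAt s (2 * u * r) t) (hr : r ≠ 0)
    (hC : s t ^ 2 + r ^ 2 = C ^ 2) :
    HasDerivAt (fun τ => (C + s τ) / (C - s τ))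
      (4 * C * (u / r) * ((C + s t) / (C - s t))) t := by
  have hfactor : r ^ 2 = (C + s t) * (C - s t) := by linear_combination hC
  have hsub : C - s t ≠ 0 := right_ne_zero_of_mul (hfactor ▸ pow_ne_zero 2 hr)
  refine ((hs.const_add C).div (hs.const_sub C) hsub).congr_deriv ?_
  field_simp
  linear_combination 4 * C * u * hfactor

/-- The su(2) Lax system `ṡ = 2ur`, `ṙ = −2us` on `J`, satisfied by the coefficients `s`, `r` of the
Lax operator. The derivatives are two-sided, also at endpoints of `J`. -/
structure IsSuTwoLaxSolutionOn (s r u : ℝ → ℝ) (J : Set ℝ) : Prop where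
  hasDerivAt_s : ∀ t ∈ J, HasDerivAt s (2 * u t * r t) t
  hasDerivAt_r : ∀ t ∈ J, HasDerivAt r (-2 * u t * s t) t

namespace IsSuTwoLaxSolutionOn

variable {s r u : ℝ → ℝ} {J : Set ℝ} {a t : ℝ}

theorem sq_add_sq_eq (h : IsSuTwoLaxSolutionOn s r u J) (hJ : J.OrdConnected) (ha : a ∈ J)
    (ht : t ∈ J) : s t ^ 2 + r t ^ 2 = s a ^ 2 + r a ^ 2 := by
  have hderiv : ∀ τ ∈ J, HasDerivAt (fun τ => s τ ^ 2 + r τ ^ 2) 0 τ := fun τ hτ => by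
    refine (((h.hasDerivAt_s τ hτ).pow 2).add ((h.hasDerivAt_r τ hτ).pow 2)).congr_deriv ?_
    push_cast
    ring
  exact eq_of_hasDerivWithinAt_eq_zero hJ.convex (fun τ hτ => (hderiv τ hτ).hasDerivWithinAt) ha ht

theorem intervalIntegrable_div (h : IsSuTwoLaxSolutionOn s r u J) (hJ : J.OrdConnected)
    (hr : ∀ τ ∈ J, r τ ≠ 0) (ha : a ∈ J) (ht : t ∈ J) (hu : IntervalIntegrable u volume a t) :
    IntervalIntegrable (fun τ => u τ / r τ) volume a t := by
  have hcont : ContinuousOn (fun τ => (r τ)⁻¹) (uIcc a t) := fun τ hτ =>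
    have hτJ := hJ.uIcc_subset ha ht hτ
    ((h.hasDerivAt_r τ hτJ).continuousAt.inv₀ (hr τ hτJ)).continuousWithinAt
  simpa only [div_eq_mul_inv] using hu.mul_continuousOn hcont

end IsSuTwoLaxSolutionOn

theorem stmt_13_general {s r u : ℝ → ℝ} {J : Set ℝ} {a C : ℝ} (h : IsSuTwoLaxSolutionOn s r u J)
    (hJ : J.OrdConnected) (ha : a ∈ J) (hu : ∀ t ∈ J, IntervalIntegrable u volume a t)
    (hr : ∀ t ∈ J, r t ≠ 0) (hC : C = Real.sqrt (s a ^ 2 + r a ^ 2)) :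
    (∀ t ∈ J, s t ^ 2 + r t ^ 2 = C ^ 2 ∧ 0 < C - s t) ∧
    (∀ t ∈ J, HasDerivAt (fun τ => (C + s τ) / (C - s τ))
      (4 * C * (u t / r t) * ((C + s t) / (C - s t))) t) ∧
    (∀ t ∈ J, (C + s t) / (C - s t)
      = (C + s a) / (C - s a) * Real.exp (4 * C * ∫ τ in a..t, u τ / r τ)) := by
  have hcons : ∀ t ∈ J, s t ^ 2 + r t ^ 2 = C ^ 2 := fun t ht => by
    rw [hC, Real.sq_sqrt (by positivity), h.sq_add_sq_eq hJ ha ht]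
  have habs : ∀ t ∈ J, -C < s t ∧ s t < C := fun t ht =>
    abs_lt.mp (abs_lt_of_sq_add_sq_eq_sq (hC ▸ Real.sqrt_nonneg _) (hr t ht) (hcons t ht))
  have hsub : ∀ t ∈ J, 0 < C - s t := fun t ht => sub_pos.mpr (habs t ht).2
  have hpos : ∀ t ∈ J, 0 < (C + s t) / (C - s t) := fun t ht =>
    div_pos (neg_lt_iff_pos_add'.mp (habs t ht).1) (hsub t ht)
  have hderiv := fun t ht =>
    hasDerivAt_add_div_sub_of_sq_add_sq_eq_sq (h.hasDerivAt_s t ht) (hr t ht) (hcons t ht)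
  refine ⟨fun t ht => ⟨hcons t ht, hsub t ht⟩, hderiv, fun t ht => ?_⟩
  have hJt : uIcc a t ⊆ J := hJ.uIcc_subset ha ht
  rw [← intervalIntegral.integral_const_mul]
  exact eq_mul_exp_integral_of_hasDerivAt (fun τ hτ => hderiv τ (hJt hτ))
    (fun τ hτ => hpos τ (hJt hτ)) ((h.intervalIntegrable_div hJ hr ha ht (hu t ht)).const_mul _)

/-- modification function for the su(2)/Krawtchouk case:
m(t) = (C + s(t))/(C − s(t)) satisfies ṁ/m = 4C u/r, i.e.
m(t) = m(0) exp(4C ∫_0^t u/r). -/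
theorem stmt_13 (r s u : ℝ → ℝ)
    (hs : ∀ t ∈ Set.Ici (0 : ℝ), HasDerivAt s (2 * u t * r t) t)
    (hr : ∀ t ∈ Set.Ici (0 : ℝ), HasDerivAt r (-2 * u t * s t) t)
    (hu : ContinuousOn u (Set.Ici (0 : ℝ)))
    (hrpos : ∀ t ∈ Set.Ici (0 : ℝ), 0 < r t)
    (C : ℝ) (hC : C = Real.sqrt (s 0 ^ 2 + r 0 ^ 2)) :
    (∀ t ∈ Set.Ici (0 : ℝ), s t ^ 2 + r t ^ 2 = C ^ 2 ∧ 0 < C - s t) ∧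
    (∀ t ∈ Set.Ici (0 : ℝ),
      HasDerivAt (fun τ => (C + s τ) / (C - s τ))
        (4 * C * (u t / r t) * ((C + s t) / (C - s t))) t) ∧
    (∀ t ∈ Set.Ici (0 : ℝ),
      (C + s t) / (C - s t)
        = (C + s 0) / (C - s 0) * Real.exp (4 * C * ∫ τ in (0 : ℝ)..t, u τ / r τ)) :=
  stmt_13_general ⟨hs, hr⟩ ordConnected_Ici self_mem_Ici
    (fun _ ht => (hu.mono (ordConnected_Ici.uIcc_subset self_mem_Ici ht)).intervalIntegrable)
    (fun t ht => (hrpos t ht).ne') hC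
end
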